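/- arXiv:2110.13886 — 2 statements merged into one kernel-verified Lean document; each statement's English description precedes it below -/
import Mathlib

section
/- For every integer e ≥ 7 and each i ∈ {2,3}, there exists a finite metabelian σ-group M of order 3^{8+e}, generated by two elements x and y satisfying w^3 = 1, y^3 = s₇, s_j^3 = s_{j+2}^2 s_{j+3} for j = 2,3,4, s₅^3 = s₇^2, t₃ = s₃ w^{i-1}, and t_j = s_j for j = 4,…,7, whose abelianization is isomorphic to (ZMod (3^e)) × (ZMod 3); moreover there exists a finite group G of order 3^{10+e} with the same abelianization, admitting a σ-automorphism, with second derived subgroup nontrivial and third derived subgroup trivial (derived length exactly 3), such that G/G'' is isomorphic to M. -/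
/-- The commutator `[a,b] = a⁻¹ * b⁻¹ * a * b`. -/
def comm' {G : Type*} [Group G] (a b : G) : G := a⁻¹ * b⁻¹ * a * b

/-- `s₂ = [y,x]` and `s_j = [s_(j-1), x]` for `j ≥ 3`. -/
def sgen {G : Type*} [Group G] (x y : G) : ℕ → G
  | 0 => 1
  | 1 => 1
  | 2 => comm' y x
  | (n + 3) => comm' (sgen x y (n + 2)) x

/-- `t_j = [s_(j-1), y]` for `j ≥ 3`. -/
def tgenD {G : Type*} [Group G] (x y : G) (j : ℕ) : G := comm' (sgen x y (j - 1)) y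

/-- `t₂ = [y,x]` and `t_j = [t_(j-1), y]` for `j ≥ 3`. -/
def tgenB {G : Type*} [Group G] (x y : G) : ℕ → G
  | 0 => 1
  | 1 => 1
  | 2 => comm' y x
  | (n + 3) => comm' (tgenB x y (n + 2)) y

/-- A σ-group: a group admitting an automorphism acting as inversion on the
abelianization. -/
def IsSigmaGroup (G : Type*) [Group G] : Prop :=
  ∃ σ : G ≃* G, ∀ g : G, Abelianization.of (σ g) = (Abelianization.of g)⁻¹

/-- A group is metabelian if its commutator subgroup is abelian, i.e. the second
derived subgroup is trivial. -/
def IsMetabelian (G : Type*) [Group G] : Prop := derivedSeries G 2 = ⊥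

/-!
Both groups live on the set `A × C` with `A = ℤ/81 ⊕ ℤ/27` and `C` cyclic. Every element has a
degree in `ℤ/3`: right multiplication by an element of degree `j` acts on `A` through the `j`-th
power of an automorphism of order three, and products pick up in `C` the alternating form `det`
times a fixed element `ω`. The relations between the commutators `s_j` become linear relations
in `A`.

Commutators of elements of degree zero lie in `C` and are twice the value of the form. The form
takes the value `ω` on `A`, but only multiples of `3 ω` on the `A`-components of the commutator
subgroup, so the abelianization is `C / ⟨ω⟩ × ℤ/3` while the second derived subgroup is generated by
`3 ω`. For `C = ℤ/3^(e+1)` and `ω = κ 3^e` this subgroup is trivial, and the group is `M`. For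
`C = ℤ/3^(e+3)` and the same `ω` it has order nine, and reduction modulo `3^(e+1)` maps the
resulting group `G` onto `M` with kernel exactly this subgroup.
-/

open scoped commutatorElement

theorem comm'_eq_inv_mul {G : Type*} [Group G] (a b : G) : comm' a b = (b * a)⁻¹ * (a * b) := by
  simp only [comm', mul_inv_rev, mul_assoc]

theorem comm'_eq_commutatorElement {G : Type*} [Group G] (a b : G) : comm' a b = ⁅a⁻¹, b⁻¹⁆ := by
  rw [comm', commutatorElement_def, inv_inv, inv_inv]

theorem comm'_mem_commutator {G : Type*} [Group G] {H K : Subgroup G} {a b : G}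
    (ha : a ∈ H) (hb : b ∈ K) : comm' a b ∈ ⁅H, K⁆ :=
  comm'_eq_commutatorElement a b ▸
    Subgroup.commutator_mem_commutator (H.inv_mem ha) (K.inv_mem hb)

theorem commutator_le_of_comm'_mem {G : Type*} [Group G] {H K L : Subgroup G}
    (h : ∀ a ∈ H, ∀ b ∈ K, comm' a b ∈ L) : ⁅H, K⁆ ≤ L := by
  refine Subgroup.commutator_le.2 fun a ha b hb ↦ ?_
  simpa only [comm'_eq_commutatorElement, inv_inv] using
    h a⁻¹ (H.inv_mem ha) b⁻¹ (K.inv_mem hb)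

/-- The data for a group law on `A × C` in which the right factor of a product acts on the
`A`-component of the left one through its degree, while the `A`-components contribute to `C` by an
alternating form. -/
structure TwistDatum (J A C : Type*) [AddCommGroup J] [AddCommGroup A] [AddCommGroup C] where
  act : J → AddMonoid.End A
  act_zero : ∀ p, act 0 p = p
  act_add : ∀ i j p, act (i + j) p = act i (act j p)
  degA : A →+ J
  degC : C →+ J
  form : A →+ A →+ C
  degA_act : ∀ j p, degA (act j p) = degA p
  degC_form : ∀ p q, degC (form p q) = 0
  form_act : ∀ j p q, form (act j p) (act j q) = form p q
  form_self : ∀ p, form p p = 0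

namespace TwistDatum

variable {J A C D : Type*} [AddCommGroup J] [AddCommGroup A] [AddCommGroup C] [AddCommGroup D]
  (E : TwistDatum J A C)

theorem form_swap (p q : A) : E.form q p = -E.form p q := by
  have h := E.form_self (p + q)
  simp only [map_add, AddMonoidHom.add_apply, E.form_self, zero_add, add_zero] at h
  exact eq_neg_of_add_eq_zero_left h

/-- The set `A × C` with the group law of a twist datum. -/
@[ext] structure Extension (_ : TwistDatum J A C) where
  fst : A
  snd : C

namespace Extension

variable {E}

/-- The degree of an element, which says how right multiplication by it acts on `A`. -/
def deg (g : E.Extension) : J := E.degA g.fst + E.degC g.snd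

theorem deg_mk (p : A) (c : C) : deg (⟨p, c⟩ : E.Extension) = E.degA p + E.degC c := rfl

instance : Mul E.Extension :=
  ⟨fun g h ↦ ⟨E.act h.deg g.fst + h.fst, g.snd + h.snd + E.form (E.act h.deg g.fst) h.fst⟩⟩

instance : One E.Extension := ⟨⟨0, 0⟩⟩

instance : Inv E.Extension := ⟨fun g ↦ ⟨-E.act (-g.deg) g.fst, -g.snd⟩⟩

@[simp] theorem fst_mul (g h : E.Extension) : (g * h).fst = E.act h.deg g.fst + h.fst := rfl

@[simp] theorem snd_mul (g h : E.Extension) :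
    (g * h).snd = g.snd + h.snd + E.form (E.act h.deg g.fst) h.fst := rfl

@[simp] theorem fst_one : (1 : E.Extension).fst = 0 := rfl

@[simp] theorem snd_one : (1 : E.Extension).snd = 0 := rfl

@[simp] theorem fst_inv (g : E.Extension) : g⁻¹.fst = -E.act (-g.deg) g.fst := rfl

@[simp] theorem snd_inv (g : E.Extension) : g⁻¹.snd = -g.snd := rfl

theorem deg_mul (g h : E.Extension) : (g * h).deg = g.deg + h.deg := by
  simp only [deg, fst_mul, snd_mul, map_add, E.degA_act, E.degC_form]
  abel

theorem act_act_neg (j : J) (p : A) : E.act j (E.act (-j) p) = p := by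
  rw [← E.act_add, add_neg_cancel, E.act_zero]

instance : Group E.Extension := Group.ofLeftAxioms
  (fun f g h ↦ by
    have hact : E.act (g.deg + h.deg) f.fst = E.act h.deg (E.act g.deg f.fst) := by
      rw [add_comm, E.act_add]
    ext
    · simp only [fst_mul, deg_mul, hact, map_add]; abel
    · simp only [fst_mul, snd_mul, deg_mul, hact, map_add, AddMonoidHom.add_apply, E.form_act]
      abel)
  (fun g ↦ by ext <;> simp)
  (fun g ↦ by ext <;> simp [act_act_neg, E.form_self])

/-- The extension as a set of pairs. -/
def equivProd : E.Extension ≃ A × C where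
  toFun g := (g.fst, g.snd)
  invFun t := ⟨t.1, t.2⟩
  left_inv _ := rfl
  right_inv _ := rfl

instance [Finite A] [Finite C] : Finite E.Extension := Finite.of_equiv _ equivProd.symm

theorem card_eq : Nat.card E.Extension = Nat.card A * Nat.card C := by
  rw [Nat.card_congr equivProd, Nat.card_prod]

theorem inv_mul_of_deg_eq {g h : E.Extension} (hgh : g.deg = h.deg) :
    g⁻¹ * h = ⟨h.fst - g.fst, h.snd - g.snd - E.form g.fst h.fst⟩ := by
  ext
  · simp only [fst_mul, fst_inv, hgh, map_neg, act_act_neg]; abel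
  · simp only [snd_mul, snd_inv, fst_inv, hgh, map_neg, act_act_neg, AddMonoidHom.neg_apply]; abel

theorem comm'_eq_mk (g h : E.Extension) :
    comm' g h = ⟨(g * h).fst - (h * g).fst,
      (g * h).snd - (h * g).snd - E.form (h * g).fst (g * h).fst⟩ := by
  rw [comm'_eq_inv_mul]
  exact inv_mul_of_deg_eq (by rw [deg_mul, deg_mul, add_comm])

theorem comm'_of_deg_eq_zero {g h : E.Extension} (hg : g.deg = 0) (hh : h.deg = 0) :
    comm' g h = ⟨0, 2 • E.form g.fst h.fst⟩ := by
  rw [comm'_eq_mk]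
  ext
  · simp only [fst_mul, hg, hh, E.act_zero]; abel
  · simp only [fst_mul, snd_mul, hg, hh, E.act_zero, map_add, AddMonoidHom.add_apply, E.form_self,
      E.form_swap g.fst h.fst]
    abel

theorem mk_mul_mk_of_form_eq_zero {p q : A} {c d : C} (hdeg : E.degA q + E.degC d = 0)
    (hform : E.form p q = 0) : (⟨p, c⟩ : E.Extension) * ⟨q, d⟩ = ⟨p + q, c + d⟩ := by
  ext <;> simp [deg_mk, hdeg, E.act_zero, hform]

theorem mk_pow_of_deg_eq_zero {p : A} {c : C} (hdeg : E.degA p + E.degC c = 0) (n : ℕ) :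
    (⟨p, c⟩ : E.Extension) ^ n = ⟨n • p, n • c⟩ := by
  induction n with
  | zero => rw [pow_zero, zero_nsmul, zero_nsmul]; rfl
  | succ n ih =>
    rw [pow_succ, ih, mk_mul_mk_of_form_eq_zero hdeg (by simp [E.form_self]), succ_nsmul,
      succ_nsmul]

variable (E) in
/-- The embedding of `C`. -/
def inr : Multiplicative C →* E.Extension where
  toFun c := ⟨0, c.toAdd⟩
  map_one' := rfl
  map_mul' c d := by ext <;> simp

theorem mk_zero_mul (c : C) (g : E.Extension) : ⟨0, c⟩ * g = ⟨g.fst, c + g.snd⟩ := by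
  ext <;> simp

theorem mk_zero_pow (c : C) (n : ℕ) : (⟨0, c⟩ : E.Extension) ^ n = ⟨0, n • c⟩ :=
  (map_pow (inr E) (.ofAdd c) n).symm

theorem mk_zero_zpow (c : C) (n : ℤ) : (⟨0, c⟩ : E.Extension) ^ n = ⟨0, n • c⟩ :=
  (map_zpow (inr E) (.ofAdd c) n).symm

theorem mem_map_inr (K : AddSubgroup C) (g : E.Extension) :
    g ∈ K.toSubgroup.map (inr E) ↔ g.fst = 0 ∧ g.snd ∈ K :=
  ⟨by rintro ⟨c, hc, rfl⟩; exact ⟨rfl, hc⟩,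
    fun ⟨hp, hc⟩ ↦ ⟨.ofAdd g.snd, hc, Extension.ext hp.symm rfl⟩⟩

/-- The homomorphism to an abelian group given by the degree on `A` and a map on `C` killing the
form; the abelianization will be of this shape. -/
def toProd (π : C →+ D) (hπ : ∀ p q, π (E.form p q) = 0) :
    E.Extension →* Multiplicative (D × J) where
  toFun g := .ofAdd (π g.snd, E.degA g.fst)
  map_one' := by simp
  map_mul' g h := by
    rw [← ofAdd_add]
    simp [hπ, E.degA_act]

theorem mem_ker_toProd {π : C →+ D} (hπ : ∀ p q, π (E.form p q) = 0) {g : E.Extension} :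
    g ∈ (toProd π hπ).ker ↔ π g.snd = 0 ∧ E.degA g.fst = 0 :=
  Prod.mk.injEq _ _ _ _ ▸ Iff.rfl

theorem toProd_surjective {π : C →+ D} (hπ : ∀ p q, π (E.form p q) = 0)
    (hπ' : Function.Surjective π) (hdeg : Function.Surjective E.degA) :
    Function.Surjective (toProd π hπ) := fun t ↦ by
  obtain ⟨c, hc⟩ := hπ' t.toAdd.1
  obtain ⟨p, hp⟩ := hdeg t.toAdd.2
  exact ⟨⟨p, c⟩, congrArg Multiplicative.ofAdd (Prod.ext hc hp)⟩

/-- The homomorphism induced by a homomorphism of the `C`-components, the `A`-components being kept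
fixed. -/
def map {E' : TwistDatum J A D} (f : C →+ D) (hact : E'.act = E.act) (hdegA : E'.degA = E.degA)
    (hdegC : ∀ c, E'.degC (f c) = E.degC c) (hform : ∀ p q, E'.form p q = f (E.form p q)) :
    E.Extension →* E'.Extension where
  toFun g := ⟨g.fst, f g.snd⟩
  map_one' := by ext <;> simp
  map_mul' g h := by ext <;> simp [deg, hact, hdegA, hdegC, hform]

/-- The automorphism that inverts the `C`-component and reflects the `A`-component. -/
def reflect (τ : A ≃+ A) (hact : ∀ j p, τ (E.act j p) = E.act (-j) (τ p))
    (hdeg : ∀ p, E.degA (τ p) = -E.degA p) (hform : ∀ p q, E.form (τ p) (τ q) = -E.form p q) :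
    E.Extension ≃* E.Extension where
  toFun g := ⟨τ g.fst, -g.snd⟩
  invFun g := ⟨τ.symm g.fst, -g.snd⟩
  left_inv g := by simp
  right_inv g := by simp
  map_mul' g h := by
    have hneg : deg (⟨τ h.fst, -h.snd⟩ : E.Extension) = -h.deg := by
      simp only [deg, hdeg, map_neg, neg_add]
    ext
    · simp only [fst_mul, hneg, map_add, hact]
    · simp only [snd_mul, hneg, ← hact, hform]
      abel

/-- The `A`-components of a subgroup containing `C`. -/
def fstSubmonoid (H : Subgroup E.Extension) (hC : ∀ c, ⟨0, c⟩ ∈ H)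
    (hdeg : Function.Surjective E.degC) : AddSubmonoid A where
  carrier := {p | ∀ c, (⟨p, c⟩ : E.Extension) ∈ H}
  zero_mem' := hC
  add_mem' {p q} hp hq c := by
    obtain ⟨d, hd⟩ := hdeg (-E.degA q)
    convert H.mul_mem (hp (c - d - E.form p q)) (hq d) using 1
    ext
    · simp [deg_mk, hd, E.act_zero]
    · simp only [snd_mul, deg_mk, hd, add_neg_cancel, E.act_zero]
      abel

theorem mem_fstSubmonoid_of_mem {H : Subgroup E.Extension} (hC : ∀ c, ⟨0, c⟩ ∈ H)
    (hdeg : Function.Surjective E.degC) {g : E.Extension} (hg : g ∈ H) :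
    g.fst ∈ fstSubmonoid H hC hdeg := fun c ↦ by
  simpa only [mk_zero_mul, sub_add_cancel] using H.mul_mem (hC (c - g.snd)) hg

end Extension

end TwistDatum

theorem zmultiples_nsmul_of_coprime {G : Type*} [AddGroup G] {g : G} {k : ℕ}
    (hk : k.Coprime (addOrderOf g)) : AddSubgroup.zmultiples (k • g) = AddSubgroup.zmultiples g :=
  le_antisymm (AddSubgroup.zmultiples_le_of_mem (AddSubgroup.nsmul_mem_zmultiples g k))
    (AddSubgroup.zmultiples_le_of_mem (mem_zmultiples_nsmul_iff.2 hk))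

theorem ker_zmodCastHom {d n : ℕ} (h : d ∣ n) :
    (ZMod.castHom h (ZMod d)).toAddMonoidHom.ker = AddSubgroup.zmultiples (d : ZMod n) := by
  ext a
  obtain ⟨a, rfl⟩ := ZMod.intCast_surjective a
  have hcast : ZMod.castHom h (ZMod d) a = 0 ↔ (d : ℤ) ∣ a := by
    rw [map_intCast, ZMod.intCast_zmod_eq_zero_iff_dvd]
  refine hcast.trans ⟨?_, ?_⟩
  · rintro ⟨b, rfl⟩
    exact ⟨b, by simp [mul_comm]⟩
  · intro ha
    obtain ⟨b, hb⟩ := AddSubgroup.mem_zmultiples_iff.1 ha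
    rw [← hcast, ← hb, map_zsmul, map_natCast, ZMod.natCast_self, smul_zero]

/-- The module `ℤ/81 ⊕ ℤ/27`. Its generators `v = (1, 0)` and `s = (0, 1)` are the first components
of `y` and `[y, x]` in the groups constructed below. -/
abbrev D10Module := ZMod 81 × ZMod 27

namespace D10Module

theorem eq_nsmul_add_nsmul (p : D10Module) :
    p = p.1.val • ((1, 0) : D10Module) + p.2.val • ((0, 1) : D10Module) := by
  ext <;> simp

theorem hom_ext {B : Type*} [AddMonoid B] {f g : D10Module →+ B} (hv : f (1, 0) = g (1, 0))
    (hs : f (0, 1) = g (0, 1)) : f = g := by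
  ext p
  rw [eq_nsmul_add_nsmul p]
  simp only [map_add, map_nsmul, hv, hs]

theorem hom_ext₂ {B : Type*} [AddCommMonoid B] {f g : D10Module →+ D10Module →+ B}
    (hvv : f (1, 0) (1, 0) = g (1, 0) (1, 0)) (hvs : f (1, 0) (0, 1) = g (1, 0) (0, 1))
    (hsv : f (0, 1) (1, 0) = g (0, 1) (1, 0)) (hss : f (0, 1) (0, 1) = g (0, 1) (0, 1)) : f = g :=
  hom_ext (hom_ext hvv hvs) (hom_ext hsv hss)

/-- The embedding of `ℤ/27` into `ℤ/81` as the multiples of `3`. -/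
def tripling : ZMod 27 →+ ZMod 81 where
  toFun b := 3 * (b.val : ZMod 81)
  map_zero' := by decide
  map_add' := by decide

/-- Reduction from `ℤ/81` to `ℤ/27`. -/
def reduction : ZMod 81 →+* ZMod 27 := ZMod.castHom (by norm_num) (ZMod 27)

/-- The `v`-coordinate modulo `3`. -/
def residue : D10Module →+ ZMod 3 :=
  (ZMod.castHom (by norm_num : 3 ∣ 81) (ZMod 3)).toAddMonoidHom.comp (AddMonoidHom.fst _ _)

theorem residue_surjective : Function.Surjective residue := fun a ↦ ⟨(a.val, 0), by
  revert a; decide⟩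

theorem exists_tripling_eq {p : D10Module} (hp : residue p = 0) : ∃ k, tripling k = p.1 := by
  have h : ∀ a : ZMod 81, ZMod.castHom (by norm_num : 3 ∣ 81) (ZMod 3) a = 0 →
      tripling (a.val / 3 : ℕ) = a := by decide
  exact ⟨_, h p.1 hp⟩

theorem reduction_tripling (k : ZMod 27) : reduction (tripling k) = 3 * k := by
  revert k; decide

/-- The action of `x`, of order three: `v ↦ v + s` and `s ↦ -30 v - 2 s`. -/
def rotate : AddMonoid.End D10Module where
  toFun p := (p.1 - 10 * tripling p.2, reduction p.1 - 2 * p.2)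
  map_zero' := by simp
  map_add' p q := by ext <;> simp only [Prod.fst_add, Prod.snd_add, map_add] <;> ring

theorem rotate_pow_three : rotate ^ 3 = 1 := hom_ext (by decide) (by decide)

theorem residue_rotate (p : D10Module) : residue (rotate p) = residue p :=
  DFunLike.congr_fun (hom_ext (f := residue.comp rotate) (by decide) (by decide)) p

theorem residue_rotate_pow (n : ℕ) (p : D10Module) : residue ((rotate ^ n) p) = residue p := by
  induction n with
  | zero => rfl
  | succ n ih => exact pow_succ' rotate n ▸ (residue_rotate _).trans ih

/-- The involution `v ↦ -v`, `s ↦ 30 v + s`, which inverts `rotate`. -/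
def reflection : D10Module ≃+ D10Module where
  toFun p := (-p.1 + 10 * tripling p.2, p.2)
  invFun p := (-p.1 + 10 * tripling p.2, p.2)
  left_inv p := by simp
  right_inv p := by simp
  map_add' p q := by ext <;> simp only [Prod.fst_add, Prod.snd_add, map_add]; ring

theorem rotate_reflection_rotate (p : D10Module) :
    rotate (reflection (rotate p)) = reflection p :=
  DFunLike.congr_fun (hom_ext (f := rotate.comp (reflection.toAddMonoidHom.comp rotate))
    (g := reflection.toAddMonoidHom) (by decide) (by decide)) p

theorem rotate_pow_reflection_rotate_pow (n : ℕ) (p : D10Module) :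
    (rotate ^ n) (reflection ((rotate ^ n) p)) = reflection p := by
  induction n with
  | zero => rfl
  | succ n ih =>
    nth_rw 1 [pow_succ]
    rw [pow_succ']
    exact (congrArg _ (rotate_reflection_rotate _)).trans ih

theorem residue_reflection (p : D10Module) : residue (reflection p) = -residue p :=
  DFunLike.congr_fun (hom_ext (f := residue.comp reflection.toAddMonoidHom) (g := -residue)
    (by decide) (by decide)) p

/-- The determinant of two elements, with values in `ℤ/27`. -/
def det : D10Module →+ D10Module →+ ZMod 27 :=
  AddMonoidHom.mk' (fun p ↦ AddMonoidHom.mk' (fun q ↦ reduction p.1 * q.2 - reduction q.1 * p.2)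
      fun q q' ↦ by simp only [Prod.fst_add, Prod.snd_add, map_add]; ring)
    fun p p' ↦ by
      ext q
      simp only [AddMonoidHom.mk'_apply, AddMonoidHom.add_apply, Prod.fst_add, Prod.snd_add,
        map_add]
      ring

theorem det_apply (p q : D10Module) : det p q = reduction p.1 * q.2 - reduction q.1 * p.2 := rfl

theorem det_self (p : D10Module) : det p p = 0 := sub_self _

theorem det_rotate (p q : D10Module) : det (rotate p) (rotate q) = det p q :=
  DFunLike.congr_fun (DFunLike.congr_fun (hom_ext₂ (f := (det.comp rotate).compl₂ rotate)
    (by decide) (by decide) (by decide) (by decide)) p) q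

theorem det_rotate_pow (n : ℕ) (p q : D10Module) :
    det ((rotate ^ n) p) ((rotate ^ n) q) = det p q := by
  induction n with
  | zero => rfl
  | succ n ih => exact pow_succ' rotate n ▸ (det_rotate _ _).trans ih

theorem det_reflection (p q : D10Module) : det (reflection p) (reflection q) = -det p q :=
  DFunLike.congr_fun (DFunLike.congr_fun (hom_ext₂
    (f := (det.comp reflection.toAddMonoidHom).compl₂ reflection.toAddMonoidHom) (g := -det)
    (by decide) (by decide) (by decide) (by decide)) p) q

theorem exists_det_eq_three_mul {p q : D10Module} (hp : residue p = 0) (hq : residue q = 0) :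
    ∃ d, det p q = 3 * d := by
  obtain ⟨k, hk⟩ := exists_tripling_eq hp
  obtain ⟨l, hl⟩ := exists_tripling_eq hq
  refine ⟨k * q.2 - l * p.2, ?_⟩
  rw [det_apply, ← hk, ← hl, reduction_tripling, reduction_tripling]
  ring

/-- The action of commutation with `x`. -/
def delta : AddMonoid.End D10Module := rotate - 1

theorem delta_apply (p : D10Module) : delta p = rotate p - p := rfl

theorem residue_delta (p : D10Module) : residue (delta p) = 0 := by
  rw [delta_apply, map_sub, residue_rotate, sub_self]

theorem exists_delta_eq {p : D10Module} (hp : residue p = 0) : ∃ q, delta q = p := by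
  obtain ⟨k, hk⟩ := exists_tripling_eq hp
  obtain ⟨a, ha⟩ : ∃ a, reduction a = p.2 + 24 * k := ZMod.castHom_surjective _ _
  refine ⟨(a, 8 * k), Prod.ext ?_ ?_⟩
  · have h : ∀ k : ZMod 27, 0 - 10 * tripling (8 * k) = tripling k := by decide
    rw [← hk, ← h k]
    change a - 10 * tripling (8 * k) - a = _
    abel
  · change reduction a - 2 * (8 * k) - 8 * k = p.2
    linear_combination ha

theorem exists_three_mul_eq_delta_snd {p : D10Module} (hp : residue p = 0) :
    ∃ d, (delta p).2 = 3 * d := by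
  obtain ⟨k, hk⟩ := exists_tripling_eq hp
  refine ⟨k - p.2, ?_⟩
  change reduction p.1 - 2 * p.2 - p.2 = _
  rw [← hk, reduction_tripling]
  ring

/-- The iterated commutator `[s, x, …, x]` with `k` entries `x`. -/
def commSeq : ℕ → D10Module
  | 0 => (0, 1)
  | k + 1 => delta (commSeq k)

theorem residue_commSeq (k : ℕ) : residue (commSeq k) = 0 := by
  cases k
  exacts [rfl, residue_delta _]

theorem three_nsmul_commSeq (k : ℕ) :
    3 • commSeq k = 2 • commSeq (k + 2) + commSeq (k + 3) := by
  induction k with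
  | zero => decide
  | succ k ih =>
    have h := congrArg delta ih
    rwa [map_nsmul, map_add, map_nsmul] at h

end D10Module

/-- The data for building a group on `D10Module × C` with generators `x = (0, ξ)` and
`y = (v, μ)`, of which `x` acts on the module by `rotate`. -/
structure D10Datum (C : Type*) [AddCommGroup C] where
  deg : C →+ ZMod 3
  ξ : C
  deg_ξ : deg ξ = 1
  μ : C
  deg_μ : deg μ = 0
  smul_μ : 81 • μ = 0

namespace D10Datum

open D10Module TwistDatum TwistDatum.Extension

variable {B C C' : Type*} [AddCommGroup B] [AddCommGroup C] [AddCommGroup C'] (P : D10Datum C)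
  {P' : D10Datum C'}

/-- The value of the form on the two generators of the module. With the choice `3 μ` the component
of `y ^ 3` in `C` vanishes. -/
def ω : C := 3 • P.μ

theorem deg_ω : P.deg P.ω = 0 := by
  rw [ω, map_nsmul, deg_μ, nsmul_zero]

theorem smul_ω : 27 • P.ω = 0 := by
  rw [ω, smul_smul]
  exact P.smul_μ

/-- The homomorphism from `ℤ/27` sending `1` to `ω`. -/
def multiple : ZMod 27 →+ C :=
  ZMod.lift 27 ⟨zmultiplesHom C P.ω, by
    rw [zmultiplesHom_apply, natCast_zsmul, P.smul_ω]⟩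

theorem multiple_one : P.multiple 1 = P.ω := by
  rw [← Int.cast_one, multiple, ZMod.lift_coe]
  exact one_zsmul P.ω

theorem multiple_eq_nsmul (d : ZMod 27) : P.multiple d = d.val • P.ω := by
  rw [← multiple_one, ← map_nsmul, nsmul_one, ZMod.natCast_zmod_val]

theorem multiple_mem_zmultiples (d : ZMod 27) : P.multiple d ∈ AddSubgroup.zmultiples P.ω :=
  P.multiple_eq_nsmul d ▸ AddSubgroup.nsmul_mem_zmultiples P.ω d.val

theorem deg_multiple (d : ZMod 27) : P.deg (P.multiple d) = 0 := by
  rw [multiple_eq_nsmul, map_nsmul, deg_ω, nsmul_zero]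

theorem multiple_three_mul (d : ZMod 27) : P.multiple (3 * d) = d.val • 3 • P.ω := by
  rw [show 3 * d = 3 • d from (nsmul_eq_mul 3 d).symm, map_nsmul, multiple_eq_nsmul,
    nsmul_left_comm]

/-- The twist datum in which degree `1` acts by `rotate` and the form is `det` times `ω`. -/
def twist : TwistDatum (ZMod 3) D10Module C where
  act j := rotate ^ j.val
  act_zero _ := rfl
  act_add i j p := by
    rw [ZMod.val_add, ← pow_eq_pow_mod _ rotate_pow_three, pow_add]
    rfl
  degA := residue
  degC := P.deg
  form := det.compr₂ P.multiple
  degA_act j := residue_rotate_pow j.val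
  degC_form _ _ := P.deg_multiple _
  form_act j p q := congrArg P.multiple (det_rotate_pow j.val p q)
  form_self p := (congrArg P.multiple (det_self p)).trans (map_zero _)

/-- The group on `D10Module × C` built from `P`. -/
abbrev TowerGroup : Type _ := P.twist.Extension

theorem form_apply (p q : D10Module) : P.twist.form p q = P.multiple (det p q) := rfl

theorem act_one (p : D10Module) : P.twist.act 1 p = rotate p := rfl

variable {P} in
theorem deg_def (g : P.TowerGroup) : g.deg = residue g.fst + P.deg g.snd := rfl

/-- The first generator. -/
def x : P.TowerGroup := ⟨0, P.ξ⟩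

theorem fst_x : P.x.fst = 0 := rfl

theorem snd_x : P.x.snd = P.ξ := rfl

/-- The second generator. -/
def y : P.TowerGroup := ⟨(1, 0), P.μ⟩

theorem fst_y : P.y.fst = (1, 0) := rfl

theorem snd_y : P.y.snd = P.μ := rfl

theorem deg_x : P.x.deg = 1 := by
  rw [deg_def, x, map_zero, deg_ξ, zero_add]

theorem deg_y : P.y.deg = 1 := by
  rw [deg_def, y, deg_μ, add_zero]
  rfl

theorem comm'_x (g : P.TowerGroup) :
    comm' g P.x = ⟨delta g.fst, -P.multiple (det g.fst (rotate g.fst))⟩ := by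
  rw [comm'_eq_mk]
  ext1
  · simp only [fst_mul, deg_x, act_one, delta_apply, fst_x, map_zero, add_zero, zero_add]
  · simp only [fst_mul, snd_mul, deg_x, act_one, fst_x, snd_x, map_zero,
      AddMonoidHom.zero_apply, form_apply, add_zero, zero_add]
    abel

theorem mk_zero_mem_commutator {c : C} (hc : c ∈ AddSubgroup.zmultiples P.ω) :
    (⟨0, c⟩ : P.TowerGroup) ∈ commutator P.TowerGroup := by
  obtain ⟨n, rfl⟩ := hc
  have hdeg : (⟨(1, 0), -P.ξ⟩ : P.TowerGroup).deg = 0 := by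
    rw [deg_def, map_neg, deg_ξ]
    exact add_neg_cancel 1
  have hdet : (14 * 2) • det (1, 0) (0, 1) = 1 := by decide
  have hcomm : comm' (⟨(1, 0), -P.ξ⟩ : P.TowerGroup) ⟨(0, 1), 0⟩ ^ 14 = ⟨0, P.ω⟩ := by
    rw [comm'_of_deg_eq_zero hdeg (by rw [deg_def, map_zero]; rfl), mk_zero_pow, form_apply,
      smul_smul, ← map_nsmul]
    exact congrArg _ ((congrArg P.multiple hdet).trans P.multiple_one)
  rw [← mk_zero_zpow, ← hcomm]
  exact zpow_mem (pow_mem (comm'_mem_commutator (Subgroup.mem_top _) (Subgroup.mem_top _)) _) _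

theorem ker_toProd_eq_commutator {π : C →+ B} (hπ : π.ker = AddSubgroup.zmultiples P.ω)
    (hform : ∀ p q, π (P.twist.form p q) = 0) :
    (toProd π hform).ker = commutator P.TowerGroup := by
  refine le_antisymm (fun g hg ↦ ?_) (Abelianization.commutator_subset_ker _)
  obtain ⟨hsnd, hfst⟩ := (mem_ker_toProd hform).1 hg
  obtain ⟨q, hq⟩ := exists_delta_eq hfst
  let z : P.TowerGroup := ⟨q, 0⟩
  have hg_eq : g = ⟨0, g.snd + P.multiple (det q (rotate q))⟩ * comm' z P.x := by
    rw [comm'_x, mk_zero_mul, hq, add_neg_cancel_right]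
  rw [hg_eq]
  refine mul_mem (P.mk_zero_mem_commutator (add_mem ?_ (P.multiple_mem_zmultiples _)))
    (comm'_mem_commutator (Subgroup.mem_top _) (Subgroup.mem_top _))
  rwa [← hπ]

theorem mem_commutator {g : P.TowerGroup} :
    g ∈ commutator P.TowerGroup ↔ residue g.fst = 0 ∧ g.snd ∈ AddSubgroup.zmultiples P.ω := by
  let π := QuotientAddGroup.mk' (AddSubgroup.zmultiples P.ω)
  have hπ : π.ker = AddSubgroup.zmultiples P.ω := QuotientAddGroup.ker_mk' _
  have hform (p q : D10Module) : π (P.twist.form p q) = 0 := by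
    rw [← AddMonoidHom.mem_ker, hπ]
    exact P.multiple_mem_zmultiples _
  rw [← P.ker_toProd_eq_commutator hπ hform, mem_ker_toProd, ← AddMonoidHom.mem_ker, hπ,
    and_comm]
  rfl

/-- The abelianization, described by a surjection from `C` with kernel generated by `ω`. -/
noncomputable def abelianizationEquiv {π : C →+ B} (hπ : π.ker = AddSubgroup.zmultiples P.ω)
    (hsurj : Function.Surjective π) :
    Abelianization P.TowerGroup ≃* Multiplicative (B × ZMod 3) :=
  have hform p q : π (P.twist.form p q) = 0 := by
    rw [← AddMonoidHom.mem_ker, hπ]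
    exact P.multiple_mem_zmultiples _
  (QuotientGroup.quotientMulEquivOfEq (P.ker_toProd_eq_commutator hπ hform).symm).trans
    (QuotientGroup.quotientKerEquivOfSurjective _
      (toProd_surjective hform hsurj residue_surjective))

theorem isSigmaGroup : IsSigmaGroup P.TowerGroup := by
  have hact : ∀ (j : ZMod 3) (p : D10Module),
      reflection (P.twist.act j p) = P.twist.act (-j) (reflection p) := by
    intro j p
    rw [← act_act_neg (E := P.twist) (-j) (reflection (P.twist.act j p)), neg_neg]
    exact congrArg _ (rotate_pow_reflection_rotate_pow j.val p)
  have hform (p q : D10Module) :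
      P.twist.form (reflection p) (reflection q) = -P.twist.form p q := by
    rw [form_apply, det_reflection, map_neg, form_apply]
  refine ⟨reflect reflection hact residue_reflection hform, fun g ↦ ?_⟩
  rw [eq_inv_iff_mul_eq_one, ← map_mul, ← MonoidHom.mem_ker, Abelianization.ker_of, mem_commutator]
  constructor
  · rw [fst_mul, map_add]
    refine (congrArg (· + _) ((P.twist.degA_act _ _).trans (residue_reflection _))).trans ?_
    exact neg_add_cancel _
  · refine add_mem ?_ (P.multiple_mem_zmultiples _)
    exact (neg_add_cancel g.snd).symm ▸ zero_mem _

theorem deg_eq_zero_of_mem_derivedSeries_one {g : P.TowerGroup}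
    (hg : g ∈ derivedSeries P.TowerGroup 1) : g.deg = 0 := by
  rw [derivedSeries_one, mem_commutator] at hg
  obtain ⟨n, hn⟩ := hg.2
  rw [deg_def, hg.1, ← hn, map_zsmul, deg_ω, smul_zero, add_zero]

theorem derivedSeries_two : derivedSeries P.TowerGroup 2 =
    (AddSubgroup.zmultiples (3 • P.ω)).toSubgroup.map (inr P.twist) := by
  refine le_antisymm (commutator_le_of_comm'_mem fun g hg h hh ↦ ?_) fun g hg ↦ ?_
  · rw [comm'_of_deg_eq_zero (P.deg_eq_zero_of_mem_derivedSeries_one hg)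
      (P.deg_eq_zero_of_mem_derivedSeries_one hh), mem_map_inr]
    rw [derivedSeries_one, mem_commutator] at hg hh
    obtain ⟨d, hd⟩ := exists_det_eq_three_mul hg.1 hh.1
    rw [form_apply, hd, multiple_three_mul, smul_smul]
    exact ⟨rfl, AddSubgroup.nsmul_mem_zmultiples _ _⟩
  · obtain ⟨hfst, n, hn⟩ := (mem_map_inr _ g).1 hg
    have hmem (p : D10Module) (hp : residue p = 0) :
        (⟨p, 0⟩ : P.TowerGroup) ∈ derivedSeries P.TowerGroup 1 := by
      rw [derivedSeries_one, mem_commutator]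
      exact ⟨hp, zero_mem _⟩
    have hdet : (14 * 2) • det (3, 0) (0, 1) = 3 • 1 := by decide
    have hcomm : comm' (⟨(3, 0), 0⟩ : P.TowerGroup) ⟨(0, 1), 0⟩ ^ 14 = ⟨0, 3 • P.ω⟩ := by
      rw [comm'_of_deg_eq_zero (P.deg_eq_zero_of_mem_derivedSeries_one (hmem _ rfl))
        (P.deg_eq_zero_of_mem_derivedSeries_one (hmem _ rfl)), mk_zero_pow, form_apply,
        smul_smul, ← map_nsmul, hdet, map_nsmul, multiple_one]
    have hg_eq : g = ⟨0, 3 • P.ω⟩ ^ n := (Extension.ext hfst hn.symm).trans (mk_zero_zpow _ n).symm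
    rw [hg_eq, ← hcomm]
    exact zpow_mem (pow_mem (comm'_mem_commutator (hmem _ rfl) (hmem _ rfl)) _) _

theorem derivedSeries_two_eq_bot_iff : derivedSeries P.TowerGroup 2 = ⊥ ↔ 3 • P.ω = 0 := by
  rw [derivedSeries_two, Subgroup.eq_bot_iff_forall]
  constructor
  · intro h
    exact congrArg Extension.snd
      (h ⟨0, 3 • P.ω⟩ ((mem_map_inr _ _).2 ⟨rfl, AddSubgroup.mem_zmultiples _⟩))
  · intro h g hg
    rw [h, AddSubgroup.zmultiples_zero_eq_bot, mem_map_inr] at hg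
    exact Extension.ext hg.1 hg.2

theorem derivedSeries_three : derivedSeries P.TowerGroup 3 = ⊥ := by
  refine le_bot_iff.1 (commutator_le_of_comm'_mem fun g hg h hh ↦ ?_)
  have hle : derivedSeries P.TowerGroup 2 ≤ derivedSeries P.TowerGroup 1 :=
    derivedSeries_antitone _ one_le_two
  rw [comm'_of_deg_eq_zero (P.deg_eq_zero_of_mem_derivedSeries_one (hle hg))
    (P.deg_eq_zero_of_mem_derivedSeries_one (hle hh))]
  rw [derivedSeries_two, mem_map_inr] at hg
  rw [hg.1, map_zero, AddMonoidHom.zero_apply, nsmul_zero]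
  rfl

theorem closure_x_y (hξ : AddSubgroup.zmultiples P.ξ = ⊤) :
    Subgroup.closure {P.x, P.y} = ⊤ := by
  let H := Subgroup.closure {P.x, P.y}
  have hx : P.x ∈ H := Subgroup.subset_closure (by simp)
  have hy : P.y ∈ H := Subgroup.subset_closure (by simp)
  have hC (c : C) : (⟨0, c⟩ : P.TowerGroup) ∈ H := by
    obtain ⟨n, rfl⟩ := AddSubgroup.mem_zmultiples_iff.1 (hξ ▸ AddSubgroup.mem_top c)
    rw [← mk_zero_zpow]
    exact H.zpow_mem hx n
  have hdeg : Function.Surjective P.deg := fun j ↦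
    ⟨j.val • P.ξ, by rw [map_nsmul, deg_ξ, nsmul_one, ZMod.natCast_zmod_val]⟩
  have hv : ((1, 0) : D10Module) ∈ fstSubmonoid H hC hdeg := mem_fstSubmonoid_of_mem hC hdeg hy
  have hvs : ((1, 1) : D10Module) ∈ fstSubmonoid H hC hdeg := by
    have hyx : (P.y * P.x).fst = (1, 1) := by
      rw [fst_mul, deg_x, act_one, fst_y, fst_x]
      decide
    exact hyx ▸ mem_fstSubmonoid_of_mem hC hdeg (H.mul_mem hy hx)
  refine Subgroup.eq_top_iff' _ |>.2 fun g ↦ ?_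
  suffices h : g.fst ∈ fstSubmonoid H hC hdeg from h g.snd
  have hspan : g.fst = (g.fst.1 - g.fst.2.val).val • ((1, 0) : D10Module) +
      g.fst.2.val • ((1, 1) : D10Module) := by
    ext <;> simp
  rw [hspan]
  exact add_mem (nsmul_mem hv _) (nsmul_mem hvs _)

/-- The homomorphism induced by a homomorphism of the second components. -/
def towerMap (f : C →+ C') (hdeg : P'.deg.comp f = P.deg) (hμ : f P.μ = P'.μ) :
    P.TowerGroup →* P'.TowerGroup :=
  TwistDatum.Extension.map f rfl rfl (DFunLike.congr_fun hdeg) fun p q ↦ by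
    rw [form_apply, form_apply, multiple_eq_nsmul, multiple_eq_nsmul, ω, ω, ← hμ, map_nsmul,
      map_nsmul]

theorem towerMap_surjective {f : C →+ C'} (hdeg : P'.deg.comp f = P.deg) (hμ : f P.μ = P'.μ)
    (hf : Function.Surjective f) : Function.Surjective (P.towerMap f hdeg hμ) := fun g ↦ by
  obtain ⟨c, hc⟩ := hf g.snd
  exact ⟨⟨g.fst, c⟩, Extension.ext rfl hc⟩

theorem ker_towerMap {f : C →+ C'} (hdeg : P'.deg.comp f = P.deg) (hμ : f P.μ = P'.μ)
    (hker : f.ker = AddSubgroup.zmultiples (3 • P.ω)) :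
    (P.towerMap f hdeg hμ).ker = derivedSeries P.TowerGroup 2 := by
  ext g
  rw [derivedSeries_two, mem_map_inr, ← hker]
  exact Extension.ext_iff

theorem sgen_two : sgen P.x P.y 2 = ⟨commSeq 0, -P.ω⟩ := by
  have hv : delta (1, 0) = (0, 1) := by decide
  have hdet : det (1, 0) (rotate (1, 0)) = 1 := by decide
  rw [sgen, comm'_x, fst_y, hv, hdet, multiple_one]
  rfl

section Relations

variable {P} (hω : 3 • P.ω = 0)
include hω

theorem form_eq_zero {p q : D10Module} (hp : residue p = 0) (hq : residue q = 0) :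
    P.twist.form p q = 0 := by
  obtain ⟨d, hd⟩ := exists_det_eq_three_mul hp hq
  rw [form_apply, hd, multiple_three_mul, hω, nsmul_zero]

theorem comm'_x_of_residue_eq_zero {p : D10Module} (hp : residue p = 0) (c : C) :
    comm' (⟨p, c⟩ : P.TowerGroup) P.x = ⟨delta p, 0⟩ := by
  rw [comm'_x, ← form_apply, form_eq_zero hω hp ((residue_rotate p).trans hp), neg_zero]

theorem comm'_y_of_residue_eq_zero {p : D10Module} (hp : residue p = 0) {c : C}
    (hc : P.deg c = 0) : comm' (⟨p, c⟩ : P.TowerGroup) P.y = ⟨delta p, P.multiple p.2⟩ := by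
  have hdeg : (⟨p, c⟩ : P.TowerGroup).deg = 0 := by rw [deg_def, hp, hc, add_zero]
  obtain ⟨d, hd⟩ := exists_three_mul_eq_delta_snd hp
  have hform : P.twist.form (1, 0) (rotate p) = P.multiple p.2 := by
    have hsnd : det (1, 0) (rotate p) = 3 * d + p.2 := by
      rw [← hd, delta_apply, det_apply]
      simp
    rw [form_apply, hsnd, map_add, multiple_three_mul, hω, nsmul_zero, zero_add]
  have htwo : -(2 • P.multiple p.2) = P.multiple p.2 := neg_eq_of_add_eq_zero_right <| by
    rw [← succ_nsmul, multiple_eq_nsmul, nsmul_left_comm, hω, nsmul_zero]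
  rw [comm'_eq_mk]
  ext1
  · simp only [fst_mul, deg_y, hdeg, act_one, P.twist.act_zero, delta_apply]
    abel
  · simp only [fst_mul, snd_mul, deg_y, hdeg, act_one, P.twist.act_zero, map_add,
      AddMonoidHom.add_apply, fst_y, P.twist.form_self, P.twist.form_swap (1, 0) (rotate p),
      P.twist.form_swap (1, 0) p, hform, form_eq_zero hω hp ((residue_rotate p).trans hp)]
    exact Eq.trans (by abel) htwo

theorem sgen_add_three (k : ℕ) : sgen P.x P.y (k + 3) = ⟨commSeq (k + 1), 0⟩ := by
  induction k with
  | zero => rw [sgen, sgen_two, comm'_x_of_residue_eq_zero hω (residue_commSeq 0)]; rfl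
  | succ k ih => rw [sgen, ih, comm'_x_of_residue_eq_zero hω (residue_commSeq _)]; rfl

theorem sgen_eight : sgen P.x P.y 8 = 1 := by
  have hcommSeq : commSeq 6 = 0 := by decide
  rw [sgen_add_three hω 5, hcommSeq]
  rfl

theorem sgen_add_two_pow_three (k : ℕ) :
    sgen P.x P.y (k + 2) ^ 3 = sgen P.x P.y (k + 4) ^ 2 * sgen P.x P.y (k + 5) := by
  have hdeg (c : C) (hc : P.deg c = 0) : residue (commSeq k) + P.deg c = 0 := by
    rw [hc, residue_commSeq, add_zero]
  have hcube : sgen P.x P.y (k + 2) ^ 3 = ⟨3 • commSeq k, 0⟩ := by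
    cases k with
    | zero =>
      rw [sgen_two, mk_pow_of_deg_eq_zero (hdeg _ (by rw [map_neg, deg_ω, neg_zero])),
        smul_neg, hω, neg_zero]
    | succ k =>
      rw [sgen_add_three hω, mk_pow_of_deg_eq_zero (hdeg _ (map_zero _)), nsmul_zero]
  have hres (j : ℕ) : residue (commSeq j) + P.deg 0 = 0 := by
    rw [map_zero, residue_commSeq, add_zero]
  rw [hcube, sgen_add_three hω (k + 1), sgen_add_three hω (k + 2), mk_pow_of_deg_eq_zero (hres _),
    mk_mul_mk_of_form_eq_zero (hres _), three_nsmul_commSeq, nsmul_zero, add_zero]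
  rw [map_nsmul, AddMonoidHom.nsmul_apply, form_eq_zero hω (residue_commSeq _) (residue_commSeq _),
    nsmul_zero]

theorem tgenD_three : tgenD P.x P.y 3 = sgen P.x P.y 3 * ⟨0, P.ω⟩ := by
  rw [tgenD, sgen_two, comm'_y_of_residue_eq_zero hω (residue_commSeq 0)
    (by rw [map_neg, deg_ω, neg_zero]), sgen_add_three hω 0,
    mk_mul_mk_of_form_eq_zero ((zero_add _).trans P.deg_ω) (map_zero _), add_zero]
  exact congrArg _ (P.multiple_one.trans (zero_add P.ω).symm)

theorem tgenD_add_four (k : ℕ) : tgenD P.x P.y (k + 4) = sgen P.x P.y (k + 4) := by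
  obtain ⟨d, hd⟩ := exists_three_mul_eq_delta_snd (residue_commSeq k)
  have hmultiple : P.multiple (commSeq (k + 1)).2 = 0 := by
    rw [commSeq, hd, multiple_three_mul, hω, nsmul_zero]
  rw [tgenD, Nat.add_sub_assoc (by norm_num), sgen_add_three hω,
    comm'_y_of_residue_eq_zero hω (residue_commSeq _) (map_zero _), hmultiple,
    sgen_add_three hω (k + 1)]
  rfl

theorem y_pow_three : P.y ^ 3 = sgen P.x P.y 7 := by
  have hfst : rotate (rotate (1, 0) + (1, 0)) + (1, 0) = commSeq 5 := by decide
  have hdet₁ : det (rotate (1, 0)) (1, 0) = -1 := by decide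
  have hdet₂ : det (rotate (rotate (1, 0) + (1, 0))) (1, 0) = 0 := by decide
  rw [sgen_add_three hω 4, pow_three']
  ext1
  · simp only [fst_mul, deg_y, act_one, fst_y, hfst]
  · simp only [fst_mul, snd_mul, deg_y, act_one, fst_y, snd_y, form_apply, hdet₁, hdet₂, map_neg,
      map_zero, multiple_one, ω]
    abel

end Relations

theorem x_pow (n : ℕ) : P.x ^ n = ⟨0, n • P.ξ⟩ := mk_zero_pow P.ξ n

theorem card_towerGroup : Nat.card P.TowerGroup = 3 ^ 7 * Nat.card C := by
  rw [card_eq, Nat.card_prod, Nat.card_zmod, Nat.card_zmod]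
  norm_num

section Cyclic

variable (κ : ℕ) {e r : ℕ} (he : 2 ≤ e) (hr : r ≤ 3)

/-- The datum with `C = ℤ/3^(e+r)` generated by `ξ`, normalised such that `ω = κ 3^e`. -/
def cyclic : D10Datum (ZMod (3 ^ (e + r))) where
  deg := (ZMod.castHom (dvd_pow_self 3 (by lia)) (ZMod 3)).toAddMonoidHom
  ξ := 1
  deg_ξ := ZMod.cast_one (dvd_pow_self 3 (by lia))
  μ := κ • ((3 ^ (e - 1) : ℕ) : ZMod _)
  deg_μ := by
    rw [map_nsmul]
    refine (congrArg (κ • ·) (ZMod.cast_natCast (dvd_pow_self 3 (by lia)) _)).trans ?_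
    rw [(ZMod.natCast_eq_zero_iff _ _).2 (dvd_pow_self 3 (by lia)), nsmul_zero]
  smul_μ := by
    have hdvd : 3 ^ (e + r) ∣ 81 * 3 ^ (e - 1) := by
      rw [show 81 = 3 ^ 4 by norm_num, ← pow_add]
      exact pow_dvd_pow 3 (by lia)
    rw [nsmul_left_comm, nsmul_eq_mul 81, ← Nat.cast_mul, (ZMod.natCast_eq_zero_iff _ _).2 hdvd,
      nsmul_zero]

theorem cyclic_ω : (cyclic κ he hr).ω = κ • ((3 ^ e : ℕ) : ZMod (3 ^ (e + r))) := by
  have hpow : 3 ^ e = 3 * 3 ^ (e - 1) := (mul_pow_sub_one (by lia) 3).symm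
  rw [ω, cyclic, nsmul_left_comm, hpow, Nat.cast_mul, nsmul_eq_mul 3]

theorem three_smul_cyclic_ω :
    3 • (cyclic κ he hr).ω = κ • ((3 ^ (e + 1) : ℕ) : ZMod (3 ^ (e + r))) := by
  rw [cyclic_ω, nsmul_left_comm, pow_succ', Nat.cast_mul, nsmul_eq_mul 3]

theorem three_smul_cyclic_ω_eq_zero (hr : r ≤ 1) :
    3 • (cyclic κ he (hr.trans Nat.one_le_ofNat)).ω = 0 := by
  rw [three_smul_cyclic_ω, (ZMod.natCast_eq_zero_iff _ _).2 (pow_dvd_pow 3 (by lia)), nsmul_zero]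

theorem zmultiples_cyclic_ξ : AddSubgroup.zmultiples (cyclic κ he hr).ξ = ⊤ :=
  (AddSubgroup.eq_top_iff' _).2 fun c ↦ by
    obtain ⟨n, rfl⟩ := ZMod.intCast_surjective c
    exact ⟨n, zsmul_one n⟩

theorem card_cyclic_towerGroup :
    Nat.card (cyclic κ he hr).TowerGroup = 3 ^ (7 + (e + r)) := by
  rw [card_towerGroup, Nat.card_zmod, ← pow_add]

theorem cyclic_x_pow_pow : ((cyclic κ he hr).x ^ 3 ^ e) ^ κ = ⟨0, (cyclic κ he hr).ω⟩ := by
  rw [x_pow, mk_zero_pow, cyclic_ω, ← nsmul_one (3 ^ e)]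
  rfl

theorem cyclic_x_pow_card : ((cyclic κ he hr).x ^ 3 ^ e) ^ 3 ^ r = 1 := by
  have h : 3 ^ (e + r) • (cyclic κ he hr).ξ = 0 := by
    rw [nsmul_eq_mul, ZMod.natCast_self, zero_mul]
  rw [← pow_mul, ← pow_add, x_pow, h]
  rfl

variable {κ}

theorem zmultiples_three_pow {n k : ℕ} (hκ : ¬ 3 ∣ κ) :
    AddSubgroup.zmultiples (κ • ((3 ^ k : ℕ) : ZMod (3 ^ n))) =
      AddSubgroup.zmultiples ((3 ^ k : ℕ) : ZMod (3 ^ n)) := by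
  have horder : addOrderOf ((3 ^ k : ℕ) : ZMod (3 ^ n)) ∣ 3 ^ n := by
    simpa only [Nat.card_zmod] using addOrderOf_dvd_natCard ((3 ^ k : ℕ) : ZMod (3 ^ n))
  exact zmultiples_nsmul_of_coprime (Nat.Coprime.coprime_dvd_right horder
    (((Nat.Prime.coprime_iff_not_dvd Nat.prime_three).2 hκ).pow_left n).symm)

/-- The abelianization of the group of a cyclic datum. -/
noncomputable def cyclicAbelianizationEquiv (hκ : ¬ 3 ∣ κ) :
    Abelianization (cyclic κ he hr).TowerGroup ≃* Multiplicative (ZMod (3 ^ e) × ZMod 3) :=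
  have hdvd : 3 ^ e ∣ 3 ^ (e + r) := pow_dvd_pow 3 (Nat.le_add_right e r)
  abelianizationEquiv _ (π := (ZMod.castHom hdvd (ZMod (3 ^ e))).toAddMonoidHom)
    (by rw [ker_zmodCastHom, cyclic_ω, zmultiples_three_pow hκ])
    (ZMod.castHom_surjective hdvd)

theorem derivedSeries_two_cyclic_ne_bot (hκ : ¬ 3 ∣ κ) :
    derivedSeries (cyclic κ he le_rfl).TowerGroup 2 ≠ ⊥ := by
  rw [Ne, derivedSeries_two_eq_bot_iff, three_smul_cyclic_ω, ← AddSubgroup.zmultiples_eq_bot,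
    zmultiples_three_pow hκ, AddSubgroup.zmultiples_eq_bot, ZMod.natCast_eq_zero_iff,
    Nat.pow_dvd_pow_iff_le_right']
  lia

theorem exists_surjective_cyclic (hκ : ¬ 3 ∣ κ) :
    ∃ φ : (cyclic κ he le_rfl).TowerGroup →* (cyclic κ he Nat.one_le_ofNat).TowerGroup,
      Function.Surjective φ ∧ φ.ker = derivedSeries (cyclic κ he le_rfl).TowerGroup 2 := by
  have hdvd : 3 ^ (e + 1) ∣ 3 ^ (e + 3) := pow_dvd_pow 3 (by lia)
  let f := ZMod.castHom hdvd (ZMod (3 ^ (e + 1)))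
  have hdeg : (cyclic κ he Nat.one_le_ofNat).deg.comp f.toAddMonoidHom = (cyclic κ he le_rfl).deg :=
    congrArg RingHom.toAddMonoidHom
      (Subsingleton.elim ((ZMod.castHom (dvd_pow_self 3 e.succ_ne_zero) (ZMod 3)).comp f) _)
  have hμ : f (cyclic κ he le_rfl).μ = (cyclic κ he Nat.one_le_ofNat).μ := by
    rw [cyclic, cyclic, map_nsmul, map_natCast]
  have hker : f.toAddMonoidHom.ker = AddSubgroup.zmultiples (3 • (cyclic κ he le_rfl).ω) := by
    rw [ker_zmodCastHom, three_smul_cyclic_ω, zmultiples_three_pow hκ]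
  exact ⟨towerMap _ f.toAddMonoidHom hdeg hμ,
    towerMap_surjective _ hdeg hμ (ZMod.castHom_surjective hdvd), ker_towerMap _ hdeg hμ hker⟩

end Cyclic

end D10Datum

theorem stmt12_general (e κ : ℕ) (he : 2 ≤ e) (hκ : ¬ 3 ∣ κ) :
    ∃ (M : Type) (_ : Group M) (_ : Finite M) (x y : M),
      Subgroup.closure {x, y} = ⊤ ∧
      Nat.card M = 3 ^ (8 + e) ∧
      IsMetabelian M ∧
      IsSigmaGroup M ∧
      (x ^ 3 ^ e) ^ 3 = 1 ∧
      y ^ 3 = sgen x y 7 ∧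
      sgen x y 2 ^ 3 = sgen x y 4 ^ 2 * sgen x y 5 ∧
      sgen x y 3 ^ 3 = sgen x y 5 ^ 2 * sgen x y 6 ∧
      sgen x y 4 ^ 3 = sgen x y 6 ^ 2 * sgen x y 7 ∧
      sgen x y 5 ^ 3 = sgen x y 7 ^ 2 ∧
      tgenD x y 3 = sgen x y 3 * (x ^ 3 ^ e) ^ κ ∧
      tgenD x y 4 = sgen x y 4 ∧
      tgenD x y 5 = sgen x y 5 ∧
      tgenD x y 6 = sgen x y 6 ∧
      tgenD x y 7 = sgen x y 7 ∧
      Nonempty (Abelianization M ≃* Multiplicative (ZMod (3 ^ e) × ZMod 3)) ∧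
      ∃ (G : Type) (_ : Group G) (_ : Finite G),
        Nat.card G = 3 ^ (10 + e) ∧
        Nonempty (Abelianization G ≃* Multiplicative (ZMod (3 ^ e) × ZMod 3)) ∧
        IsSigmaGroup G ∧
        derivedSeries G 2 ≠ ⊥ ∧
        derivedSeries G 3 = ⊥ ∧
        ∃ φ : G →* M, Function.Surjective φ ∧ φ.ker = derivedSeries G 2 := by
  let P := D10Datum.cyclic κ he (r := 1) Nat.one_le_ofNat
  let Q := D10Datum.cyclic κ he (r := 3) le_rfl
  have hω : 3 • P.ω = 0 := D10Datum.three_smul_cyclic_ω_eq_zero κ he le_rfl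
  have hcube := D10Datum.sgen_add_two_pow_three hω
  have htgen := D10Datum.tgenD_add_four hω
  refine ⟨P.TowerGroup, _, inferInstance, P.x, P.y,
    P.closure_x_y (D10Datum.zmultiples_cyclic_ξ κ he _), ?_,
    P.derivedSeries_two_eq_bot_iff.2 hω, P.isSigmaGroup,
    D10Datum.cyclic_x_pow_card κ he _, D10Datum.y_pow_three hω, hcube 0, hcube 1, hcube 2, ?_, ?_,
    htgen 0, htgen 1, htgen 2, htgen 3, ⟨D10Datum.cyclicAbelianizationEquiv he _ hκ⟩,
    Q.TowerGroup, _, inferInstance, ?_, ⟨D10Datum.cyclicAbelianizationEquiv he _ hκ⟩,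
    Q.isSigmaGroup, D10Datum.derivedSeries_two_cyclic_ne_bot he hκ, Q.derivedSeries_three,
    D10Datum.exists_surjective_cyclic he hκ⟩
  · rw [D10Datum.card_cyclic_towerGroup]
    ring
  · rw [hcube 3, D10Datum.sgen_eight hω, mul_one]
  · rw [D10Datum.tgenD_three hω, D10Datum.cyclic_x_pow_pow κ he]
  · rw [D10Datum.card_cyclic_towerGroup]
    ring

theorem stmt12 (e i : ℕ) (he : 7 ≤ e) (hi : i = 2 ∨ i = 3) :
    ∃ (M : Type) (_ : Group M) (_ : Finite M) (x y : M),
      Subgroup.closure {x, y} = ⊤ ∧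
      Nat.card M = 3 ^ (8 + e) ∧
      IsMetabelian M ∧
      IsSigmaGroup M ∧
      (x ^ 3 ^ e) ^ 3 = 1 ∧
      y ^ 3 = sgen x y 7 ∧
      sgen x y 2 ^ 3 = sgen x y 4 ^ 2 * sgen x y 5 ∧
      sgen x y 3 ^ 3 = sgen x y 5 ^ 2 * sgen x y 6 ∧
      sgen x y 4 ^ 3 = sgen x y 6 ^ 2 * sgen x y 7 ∧
      sgen x y 5 ^ 3 = sgen x y 7 ^ 2 ∧
      tgenD x y 3 = sgen x y 3 * (x ^ 3 ^ e) ^ (i - 1) ∧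
      tgenD x y 4 = sgen x y 4 ∧
      tgenD x y 5 = sgen x y 5 ∧
      tgenD x y 6 = sgen x y 6 ∧
      tgenD x y 7 = sgen x y 7 ∧
      Nonempty (Abelianization M ≃* Multiplicative (ZMod (3 ^ e) × ZMod 3)) ∧
      ∃ (G : Type) (_ : Group G) (_ : Finite G),
        Nat.card G = 3 ^ (10 + e) ∧
        Nonempty (Abelianization G ≃* Multiplicative (ZMod (3 ^ e) × ZMod 3)) ∧
        IsSigmaGroup G ∧
        derivedSeries G 2 ≠ ⊥ ∧
        derivedSeries G 3 = ⊥ ∧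
        ∃ φ : G →* M, Function.Surjective φ ∧ φ.ker = derivedSeries G 2 :=
  stmt12_general e (i - 1) (by lia) (by lia)
end

section
/- For every integer e ≥ 7 and each i ∈ {2,3}, there exists a finite metabelian σ-group M of order 3^{8+e}, generated by two elements x and y satisfying w^3 = 1, y^3 = s₇, s_j^3 = s_{j+2}^2 s_{j+3} for j = 2,3,4, s₅^3 = s₇^2, t₃ = s₃ s₇ w^{i-1}, and t_j = s_j for j = 4,…,7, whose abelianization is isomorphic to (ZMod (3^e)) × (ZMod 3); moreover there exists a finite group G of order 3^{10+e} with the same abelianization, admitting a σ-automorphism, with second derived subgroup nontrivial and third derived subgroup trivial (derived length exactly 3), such that G/G'' is isomorphic to M. -/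
/-!
Let `ω` be the alternating form `a b' - b a'` on `A × ZMod 81 × ZMod 27`, where `A` is an abelian
group with a homomorphism `κ : ZMod 27 → A`. The bracket `[v, w] = (κ ω(v, w), -27 ω(v, w), 0)`
makes this group a Lie ring of class two; it has an automorphism `θ` with `θ ^ 3 = 1` and a
`θ`-invariant character `c` to `ZMod 3`. With `v ^ w := θ ^ c(w) v`, the formula
`v * w = v ^ w + w + [v ^ w, w]` is a group law. A cyclic `A` gives a group generated by
`x = (gen, 0, 0)` and `y = (0, 1, 0)`, whose derived subgroup consists of the elements
`(κ t, 3 a, b)`; commutation with `x` and `y` is polynomial in `(t, a, b)`, which makes the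
relations a finite calculation modulo 27. The second derived subgroup is generated by the central
element `(κ 3, 0, 0)`. It is trivial for `A = ZMod (3 ^ (e + 1))` and `κ 1 = 3 ^ e u`, which gives
`M`, and of order nine for `A = ZMod (3 ^ (e + 3))` and `κ 1 = 3 ^ e u`, which gives `G`. The
reduction between these two cyclic groups induces `G → M`.
-/

/-- The input of the twisted group law below: a bilinear alternating bracket on `E` for which `E` is
a Lie ring of class at most two, an automorphism `twist` of it with `twist ^ n = 1`, and a
`twist`-invariant character of it with values in `ZMod n`. -/
structure TwistDatum_s13 (n : ℕ) (E : Type*) [AddCommGroup E] where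
  bracket : E →+ E →+ E
  twist : AddMonoid.End E
  char : E →+ ZMod n
  bracket_self : ∀ v, bracket v v = 0
  bracket_bracket : ∀ u v w, bracket (bracket u v) w = 0
  twist_pow : twist ^ n = 1
  twist_bracket : ∀ v w, twist (bracket v w) = bracket (twist v) (twist w)
  char_twist : ∀ v, char (twist v) = char v
  char_bracket : ∀ v w, char (bracket v w) = 0

namespace TwistDatum_s13

variable {n : ℕ} {E : Type*} [AddCommGroup E] (D : TwistDatum_s13 n E)

/-- The action of `ZMod n` on `E` in which `1` acts as `D.twist`. -/
def act (m : ZMod n) : AddMonoid.End E := D.twist ^ m.val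

lemma bracket_swap (v w : E) : D.bracket v w = -D.bracket w v := by
  have h := D.bracket_self (v + w)
  simp only [map_add, AddMonoidHom.add_apply, D.bracket_self, zero_add, add_zero] at h
  exact eq_neg_of_add_eq_zero_right h

lemma bracket_bracket_right (u v w : E) : D.bracket u (D.bracket v w) = 0 := by
  rw [D.bracket_swap, D.bracket_bracket, neg_zero]

@[simp] lemma act_zero : D.act 0 = 1 := by simp [act]

lemma act_one : D.act 1 = D.twist := by
  rw [act, ZMod.val_one_eq_one_mod, ← pow_eq_pow_mod 1 D.twist_pow, pow_one]

lemma act_bracket (m : ZMod n) (v w : E) :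
    D.act m (D.bracket v w) = D.bracket (D.act m v) (D.act m w) := by
  unfold act
  induction m.val with
  | zero => rfl
  | succ k ih => simp only [pow_succ', AddMonoid.End.coe_mul, Function.comp_apply, ih,
      D.twist_bracket]

lemma map_act_of_map_twist {F : Type*} (f : E → F) (hf : ∀ v, f (D.twist v) = f v)
    (m : ZMod n) (v : E) : f (D.act m v) = f v := by
  rw [act, AddMonoid.End.coe_pow]
  exact congrFun (Function.iterate_invariant (funext hf) m.val) v

variable [NeZero n]

lemma act_add (l m : ZMod n) : D.act (l + m) = D.act l * D.act m := by
  rw [act, act, act, ZMod.val_add, ← pow_eq_pow_mod _ D.twist_pow, pow_add]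

lemma act_act (l m : ZMod n) (v : E) : D.act l (D.act m v) = D.act (l + m) v := by
  rw [act_add, AddMonoid.End.coe_mul, Function.comp_apply]

lemma map_act_of_semiconj {F : Type*} [AddCommGroup F] {D' : TwistDatum_s13 n F} (f : E → F)
    (s : ZMod n →+ ZMod n) (hf : ∀ v, f (D.twist v) = D'.act (s 1) (f v)) (m : ZMod n) (v : E) :
    f (D.act m v) = D'.act (s m) (f v) := by
  have key (k : ℕ) : f ((D.twist ^ k) v) = D'.act (s k) (f v) := by
    induction k with
    | zero => simp
    | succ k ih =>
      rw [pow_succ', AddMonoid.End.coe_mul, Function.comp_apply, hf, ih, D'.act_act, ← map_add,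
        Nat.cast_succ, add_comm]
  rw [act, key, ZMod.natCast_zmod_val]

end TwistDatum_s13

/-- The underlying set of a twist datum, to be given the twisted group law
`v * w = (v ^ w) + w + [v ^ w, w]`, where `v ^ w` is `v` acted upon by the character of `w`. -/
@[ext] structure TwistedGroup {n : ℕ} {E : Type*} [AddCommGroup E] (D : TwistDatum_s13 n E) where
  val : E

namespace TwistedGroup

variable {n : ℕ} {E : Type*} [AddCommGroup E] {D : TwistDatum_s13 n E}

instance : Mul (TwistedGroup D) :=
  ⟨fun g h => ⟨D.act (D.char h.val) g.val + h.val + D.bracket (D.act (D.char h.val) g.val) h.val⟩⟩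

instance : One (TwistedGroup D) := ⟨⟨0⟩⟩

instance : Inv (TwistedGroup D) := ⟨fun g => ⟨-D.act (-D.char g.val) g.val⟩⟩

lemma val_mul (g h : TwistedGroup D) : (g * h).val =
    D.act (D.char h.val) g.val + h.val + D.bracket (D.act (D.char h.val) g.val) h.val := rfl

@[simp] lemma val_one : (1 : TwistedGroup D).val = 0 := rfl

lemma val_inv (g : TwistedGroup D) : g⁻¹.val = -D.act (-D.char g.val) g.val := rfl

lemma char_val_mul (g h : TwistedGroup D) :
    D.char (g * h).val = D.char g.val + D.char h.val := by
  rw [val_mul, map_add, map_add, D.char_bracket, add_zero,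
    D.map_act_of_map_twist D.char D.char_twist]

instance [NeZero n] : Group (TwistedGroup D) where
  mul_assoc g h k := by
    ext
    rw [val_mul, val_mul g (h * k), char_val_mul, val_mul g h, val_mul h k]
    simp only [map_add, AddMonoidHom.add_apply, D.act_act, D.act_bracket, D.bracket_bracket,
      D.bracket_bracket_right, add_comm (D.char k.val)]
    abel
  one_mul g := by ext; simp [val_mul]
  mul_one g := by ext; simp [val_mul]
  inv_mul_cancel g := by ext; simp [val_mul, val_inv, D.act_act, D.bracket_self]

lemma mul_of_char_eq_zero (v : E) {w : E} (hw : D.char w = 0) :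
    (⟨v⟩ * ⟨w⟩ : TwistedGroup D) = ⟨v + w + D.bracket v w⟩ := by
  ext
  simp [val_mul, hw]

lemma mul_of_char_eq_one (v : E) {w : E} (hw : D.char w = 1) :
    (⟨v⟩ * ⟨w⟩ : TwistedGroup D) = ⟨D.twist v + w + D.bracket (D.twist v) w⟩ := by
  ext
  simp [val_mul, hw, D.act_one]

/-- The bijection of a twisted group with the abelian group carrying it. -/
def valEquiv (D : TwistDatum_s13 n E) : TwistedGroup D ≃ E where
  toFun := val
  invFun := mk
  left_inv _ := rfl
  right_inv _ := rfl

instance [Finite E] : Finite (TwistedGroup D) := Finite.of_equiv E (valEquiv D).symm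

variable [NeZero n]

/-- The homomorphism of twisted groups induced by an additive map which respects the brackets and
carries the twist and the character of `D` to those of `D'` up to an endomorphism `s` of
`ZMod n`. -/
def map {F : Type*} [AddCommGroup F] {D' : TwistDatum_s13 n F} (f : E →+ F) (s : ZMod n →+ ZMod n)
    (hb : ∀ v w, f (D.bracket v w) = D'.bracket (f v) (f w))
    (ht : ∀ v, f (D.twist v) = D'.act (s 1) (f v)) (hc : ∀ v, D'.char (f v) = s (D.char v)) :
    TwistedGroup D →* TwistedGroup D' :=
  MonoidHom.mk' (fun g => ⟨f g.val⟩) fun g h => by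
    ext
    simp only [val_mul, map_add, hb, hc, D.map_act_of_semiconj f s ht]

/-- The homomorphism to an abelian group induced by an additive map which kills brackets and is
invariant under the twist. -/
def toMultiplicative {B : Type*} [AddCommGroup B] (f : E →+ B)
    (hb : ∀ v w, f (D.bracket v w) = 0) (ht : ∀ v, f (D.twist v) = f v) :
    TwistedGroup D →* Multiplicative B :=
  MonoidHom.mk' (fun g => Multiplicative.ofAdd (f g.val)) fun g h => by
    rw [val_mul, map_add f, map_add f, hb, add_zero, D.map_act_of_map_twist f ht, ofAdd_add]

end TwistedGroup

/-- The additive map `ZMod n → ZMod N`, `m ↦ c * m`, for `c` killed by `n`. -/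
def liftMul {n N : ℕ} (c : ZMod N) (hc : c * n = 0) : ZMod n →+ ZMod N :=
  ZMod.lift n ⟨(AddMonoidHom.mulLeft c).comp (Int.castAddHom (ZMod N)), by simpa using hc⟩

lemma liftMul_intCast {n N : ℕ} {c : ZMod N} (hc : c * n = 0) (m : ℤ) : liftMul c hc m = c * m := by
  simp [liftMul]

/-- The embedding `ZMod 27 → ZMod 81`, `b ↦ 3 b`, onto the multiples of `3`. -/
def tripling : ZMod 27 →+ ZMod 81 := liftMul 3 rfl

/-- The reduction `ZMod 81 → ZMod 27`. -/
def reduction : ZMod 81 →+* ZMod 27 := ZMod.castHom (by decide) _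

/-- The reduction `ZMod 81 → ZMod 3`. -/
def residue : ZMod 81 →+* ZMod 3 := ZMod.castHom (by decide) _

lemma twentySeven_eq_zero : (27 : ZMod 27) = 0 := rfl

lemma tripling_intCast (m : ℤ) : tripling m = 3 * m := liftMul_intCast _ m

lemma tripling_reduction (a : ZMod 81) : tripling (reduction a) = 3 * a := by
  obtain ⟨m, rfl⟩ := ZMod.intCast_surjective a
  rw [map_intCast, tripling_intCast]

lemma tripling_ofNat_mul (m : ℕ) [m.AtLeastTwo] (b : ZMod 27) :
    tripling (ofNat(m) * b) = ofNat(m) * tripling b := by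
  simpa only [nsmul_eq_mul, Nat.cast_ofNat] using map_nsmul tripling (OfNat.ofNat m) b

lemma twentySeven_mul_tripling (b : ZMod 27) : 27 * tripling b = 0 := by
  rw [← tripling_ofNat_mul, twentySeven_eq_zero, zero_mul, map_zero]

lemma reduction_tripling (b : ZMod 27) : reduction (tripling b) = 3 * b := by
  obtain ⟨m, rfl⟩ := ZMod.intCast_surjective b
  rw [tripling_intCast, map_mul, map_ofNat, map_intCast]

lemma residue_tripling (b : ZMod 27) : residue (tripling b) = 0 := by
  obtain ⟨m, rfl⟩ := ZMod.intCast_surjective b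
  rw [tripling_intCast, map_mul, show residue 3 = 0 from rfl, zero_mul]

lemma exists_tripling_eq {a : ZMod 81} (ha : residue a = 0) : ∃ b, tripling b = a := by
  obtain ⟨m, rfl⟩ := ZMod.intCast_surjective a
  rw [map_intCast, ZMod.intCast_zmod_eq_zero_iff_dvd] at ha
  obtain ⟨k, rfl⟩ := ha
  exact ⟨k, by rw [tripling_intCast]; push_cast; rfl⟩

/-- An abelian group `A` with a homomorphism `κ : ZMod 27 → A`, a character `χ : A → ZMod 3`
vanishing on its image, and an element `gen` with `χ gen = 1`. It determines a group on
`A × ZMod 81 × ZMod 27` in which `gen` becomes the generator `x` and the image of `κ` becomes part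
of the derived subgroup. -/
structure AmalgamDatum (A : Type*) [AddCommGroup A] where
  κ : ZMod 27 →+ A
  χ : A →+ ZMod 3
  gen : A
  χ_κ : ∀ t, χ (κ t) = 0
  χ_gen : χ gen = 1

namespace AmalgamDatum

variable {A : Type*} [AddCommGroup A] (K : AmalgamDatum A)

/-- The alternating form `a b' - b a'` on `A × ZMod 81 × ZMod 27`. -/
def form : A × ZMod 81 × ZMod 27 →+ A × ZMod 81 × ZMod 27 →+ ZMod 27 :=
  let α : A × ZMod 81 × ZMod 27 →+ ZMod 27 :=
    reduction.toAddMonoidHom.comp ((AddMonoidHom.fst _ _).comp (AddMonoidHom.snd _ _))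
  let β : A × ZMod 81 × ZMod 27 →+ ZMod 27 := (AddMonoidHom.snd _ _).comp (AddMonoidHom.snd _ _)
  (AddMonoidHom.mul.compl₂ β).comp α - (AddMonoidHom.mul.compl₂ α).comp β

lemma form_apply (n n' : A) (a a' : ZMod 81) (b b' : ZMod 27) :
    form (n, a, b) (n', a', b') = reduction a * b' - b * reduction a' := rfl

lemma form_self (v : A × ZMod 81 × ZMod 27) : form v v = 0 := by
  obtain ⟨n, a, b⟩ := v
  rw [form_apply, mul_comm, sub_self]

/-- The bracket on `A × ZMod 81 × ZMod 27`: the alternating form followed by the central map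
`t ↦ (κ t, -27 t, 0)`. -/
def bracket : A × ZMod 81 × ZMod 27 →+ A × ZMod 81 × ZMod 27 →+ A × ZMod 81 × ZMod 27 :=
  form.compr₂ (K.κ.prod ((AddMonoidHom.mulLeft (-9)).comp tripling |>.prod 0))

lemma bracket_apply (v w : A × ZMod 81 × ZMod 27) :
    K.bracket v w = (K.κ (form v w), -9 * tripling (form v w), 0) := rfl

/-- The automorphism of order `3` of `A × ZMod 81 × ZMod 27` by which the generators `x` and `y`
act. -/
def twist : AddMonoid.End (A × ZMod 81 × ZMod 27) :=
  AddMonoidHom.mk'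
    (fun v => (v.1 + K.κ v.2.2, v.2.1 + 8 * tripling v.2.2, reduction v.2.1 - 2 * v.2.2))
    (fun v w => by ext <;> simp only [Prod.fst_add, Prod.snd_add, map_add, mul_add] <;> abel)

lemma twist_apply (n : A) (a : ZMod 81) (b : ZMod 27) :
    K.twist (n, a, b) = (n + K.κ b, a + 8 * tripling b, reduction a - 2 * b) := rfl

lemma form_twist (v w : A × ZMod 81 × ZMod 27) : form (K.twist v) (K.twist w) = form v w := by
  obtain ⟨n, a, b⟩ := v
  obtain ⟨n', a', b'⟩ := w
  simp only [twist_apply, form_apply, map_add, map_mul, map_ofNat, reduction_tripling]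
  linear_combination (b * reduction a' - reduction a * b') * twentySeven_eq_zero

lemma twist_bracket (v w : A × ZMod 81 × ZMod 27) :
    K.twist (K.bracket v w) = K.bracket (K.twist v) (K.twist w) := by
  rw [bracket_apply K v w, bracket_apply, form_twist, twist_apply]
  simp only [map_zero, mul_zero, add_zero, map_mul, reduction_tripling, sub_zero, map_neg,
    map_ofNat, Prod.mk.injEq, true_and]
  linear_combination -form v w * twentySeven_eq_zero

lemma twist_pow_three : K.twist ^ 3 = 1 := by
  ext1 ⟨n, a, b⟩
  change K.twist (K.twist (K.twist (n, a, b))) = (n, a, b)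
  simp only [twist_apply, map_add reduction, map_mul reduction, map_ofNat, reduction_tripling,
    map_sub tripling, map_sub reduction, map_add tripling, tripling_reduction, tripling_ofNat_mul]
  refine Prod.ext ?_ (Prod.ext ?_ ?_)
  · simp only [add_assoc, ← map_add K.κ, add_eq_left]
    convert map_zero K.κ using 2
    linear_combination b * twentySeven_eq_zero
  · linear_combination 8 * twentySeven_mul_tripling b
  · linear_combination (reduction a - 3 * b) * twentySeven_eq_zero

lemma form_bracket_left (u v w : A × ZMod 81 × ZMod 27) : form (K.bracket u v) w = 0 := by
  rw [bracket_apply, form_apply, map_mul, reduction_tripling, map_neg, map_ofNat]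
  linear_combination -form u v * w.2.2 * twentySeven_eq_zero

/-- The twist datum on `A × ZMod 81 × ZMod 27` given by `bracket` and `twist`, with the character
`(n, a, b) ↦ χ n + a`. -/
def twistDatum : TwistDatum_s13 3 (A × ZMod 81 × ZMod 27) where
  bracket := K.bracket
  twist := K.twist
  char := K.χ.coprod (residue.toAddMonoidHom.comp (AddMonoidHom.fst _ _))
  bracket_self v := by rw [bracket_apply, form_self]; simp
  bracket_bracket u v w := by
    rw [bracket_apply _ _ w, form_bracket_left]
    simp
  twist_pow := K.twist_pow_three
  twist_bracket := K.twist_bracket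
  char_twist := by
    rintro ⟨n, a, b⟩
    simp [twist_apply, K.χ_κ, residue_tripling]
  char_bracket v w := by
    simp [bracket_apply, K.χ_κ, residue_tripling]

end AmalgamDatum

lemma comm'_eq_of_mul_eq {G : Type*} [Group G] {g h c : G} (H : g * h = h * g * c) :
    comm' g h = c := by
  rw [comm', mul_assoc, mul_assoc, H]
  group

lemma sgen_mem {G : Type*} [Group G] {x y : G} {H : Subgroup G} (hyx : comm' y x ∈ H)
    (hx : ∀ g ∈ H, comm' g x ∈ H) : ∀ j, sgen x y j ∈ H
  | 0 => H.one_mem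
  | 1 => H.one_mem
  | 2 => hyx
  | n + 3 => hx _ (sgen_mem hyx hx (n + 2))

lemma comm'_mem_commutator_s13 {G : Type*} [Group G] (g h : G) : comm' g h ∈ commutator G := by
  have h := Subgroup.commutator_mem_commutator (Subgroup.mem_top g⁻¹) (Subgroup.mem_top h⁻¹)
  rwa [commutatorElement_def, inv_inv, inv_inv] at h

lemma comm'_mem {G : Type*} [Group G] {H : Subgroup G} {g h : G} (hg : g ∈ H) (hh : h ∈ H) :
    comm' g h ∈ H :=
  H.mul_mem (H.mul_mem (H.mul_mem (H.inv_mem hg) (H.inv_mem hh)) hg) hh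

/-- The twisted group of `K.twistDatum`; both `M` and `G` are of this form. -/
abbrev Amalgam {A : Type*} [AddCommGroup A] (K : AmalgamDatum A) : Type _ :=
  TwistedGroup K.twistDatum

namespace Amalgam

open AmalgamDatum TwistedGroup

variable {A : Type*} [AddCommGroup A] (K : AmalgamDatum A)

/-- The generator `x` of the amalgam. -/
def x : Amalgam K := ⟨(K.gen, 0, 0)⟩

/-- The generator `y` of the amalgam. -/
def y : Amalgam K := ⟨(0, 1, 0)⟩

/-- The element `(κ t, 3 a, b)`; these elements form the derived subgroup of the amalgam. -/
def der (t a b : ZMod 27) : Amalgam K := ⟨(K.κ t, tripling a, b)⟩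

variable {K}

lemma char_apply (n : A) (a : ZMod 81) (b : ZMod 27) :
    K.twistDatum.char (n, a, b) = K.χ n + residue a := rfl

lemma mk_mul_der (n : A) (a : ZMod 81) (b t a' b' : ZMod 27) :
    (⟨(n, a, b)⟩ * der K t a' b' : Amalgam K) =
      ⟨(n + K.κ (t + reduction a * b' - 3 * b * a'),
        a + tripling (a' - 9 * reduction a * b'), b + b')⟩ := by
  have hc : K.twistDatum.char (K.κ t, tripling a', b') = 0 := by
    rw [char_apply, K.χ_κ, residue_tripling, add_zero]
  have hf : form (n, a, b) (K.κ t, tripling a', b') = reduction a * b' - 3 * b * a' := by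
    rw [form_apply, reduction_tripling]
    ring
  rw [der, mul_of_char_eq_zero _ hc]
  change (⟨_ + _ + K.bracket _ _⟩ : Amalgam K) = _
  rw [bracket_apply, hf]
  ext
  · simp only [Prod.mk_add_mk, add_assoc, ← map_add, add_sub_assoc]
  · simp only [Prod.mk_add_mk, map_sub, mul_assoc, tripling_ofNat_mul]
    linear_combination twentySeven_mul_tripling (b * a')
  · simp

lemma mk_congr {n n' : A} {a a' : ZMod 81} {b b' : ZMod 27} (hn : n = n') (ha : a = a')
    (hb : b = b') : (⟨(n, a, b)⟩ : Amalgam K) = ⟨(n', a', b')⟩ := by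
  rw [hn, ha, hb]

lemma der_zero : der K 0 0 0 = 1 := by
  ext <;> simp [der]

lemma der_mul (t a b t' a' b' : ZMod 27) :
    der K t a b * der K t' a' b' =
      der K (t + t' + 3 * (a * b' - b * a')) (a + a') (b + b') := by
  rw [der, mk_mul_der, der, reduction_tripling, ← map_add, ← map_add]
  refine mk_congr (congrArg K.κ ?_) (congrArg tripling ?_) rfl
  · ring
  · linear_combination -(a * b') * twentySeven_eq_zero

lemma der_pow (t a b : ZMod 27) (k : ℕ) : der K t a b ^ k = der K (k * t) (k * a) (k * b) := by
  induction k with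
  | zero => simp [der_zero]
  | succ k ih =>
    rw [pow_succ, ih, der_mul]
    congr 1 <;> push_cast <;> ring

lemma mul_x (n : A) (a : ZMod 81) (b : ZMod 27) :
    (⟨(n, a, b)⟩ * x K : Amalgam K) =
      ⟨(n + K.κ b + K.gen, a + 8 * tripling b, reduction a - 2 * b)⟩ := by
  have hc : K.twistDatum.char (K.gen, 0, 0) = 1 := by
    rw [char_apply, K.χ_gen, map_zero, add_zero]
  rw [x, mul_of_char_eq_one _ hc]
  change (⟨K.twist _ + _ + K.bracket (K.twist _) _⟩ : Amalgam K) = _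
  rw [bracket_apply, twist_apply, form_apply]
  simp

lemma mul_y (n : A) (a : ZMod 81) (b : ZMod 27) :
    (⟨(n, a, b)⟩ * y K : Amalgam K) =
      ⟨(n + K.κ (3 * b - reduction a), a + 9 * tripling (reduction a) - 10 * tripling b + 1,
        reduction a - 2 * b)⟩ := by
  have hc : K.twistDatum.char (0, 1, 0) = 1 := by
    rw [char_apply, map_zero, map_one, zero_add]
  rw [y, mul_of_char_eq_one _ hc]
  change (⟨K.twist _ + _ + K.bracket (K.twist _) _⟩ : Amalgam K) = _
  rw [bracket_apply, twist_apply, form_apply]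
  ext
  · simp only [map_one, mul_one, mul_zero, zero_sub, Prod.mk_add_mk, add_zero, add_assoc,
      ← map_add]
    congr 2
    ring
  · simp only [map_one, mul_one, mul_zero, zero_sub, Prod.mk_add_mk, map_neg, map_sub,
      tripling_ofNat_mul]
    ring
  · simp

lemma comm'_y_x : comm' (y K) (x K) = der K 26 9 1 := by
  refine comm'_eq_of_mul_eq ?_
  rw [y, mul_x, ← y, x, mul_y, mk_mul_der]
  refine mk_congr ?_ ?_ ?_
  · have h : K.κ 26 + K.κ 1 = 0 := by rw [← map_add]; exact map_zero _
    simp [h]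
  · simp
  · simp

lemma comm'_der_x (t a b : ZMod 27) :
    comm' (der K t a b) (x K) =
      der K (b - 9 * a ^ 2 + 9 * a * b - 3 * b ^ 2) (8 * b) (3 * a - 3 * b) := by
  refine comm'_eq_of_mul_eq ?_
  rw [mul_assoc, der_mul, der, mul_x, x, mk_mul_der, reduction_tripling]
  refine mk_congr ?_ ?_ ?_
  · rw [map_zero, add_comm, ← map_add]
    congr 2
    linear_combination b ^ 2 * twentySeven_eq_zero
  · rw [map_zero, mul_zero, zero_mul, sub_zero, zero_add, map_add, tripling_ofNat_mul]
  · ring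

lemma comm'_der_y (t a b : ZMod 27) :
    comm' (der K t a b) (y K) =
      der K (5 * b - 6 * a - 9 * a ^ 2 + 9 * a * b - 3 * b ^ 2) (-b) (3 * a - 3 * b) := by
  refine comm'_eq_of_mul_eq ?_
  rw [mul_assoc, der_mul, der, mul_y, y, mk_mul_der, reduction_tripling]
  refine mk_congr ?_ ?_ ?_
  · rw [map_one, zero_add, ← map_add]
    congr 1
    ring
  · simp only [map_one, mul_one, map_add, map_sub, map_neg, tripling_ofNat_mul]
    linear_combination 2 * twentySeven_mul_tripling a - twentySeven_mul_tripling b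
  · ring

variable (K)

lemma sgen_three : sgen (x K) (y K) 3 = der K 25 8 24 := by
  rw [sgen, sgen, comm'_y_x, comm'_der_x]
  rfl

lemma sgen_four : sgen (x K) (y K) 4 = der K 15 3 6 := by
  rw [sgen, sgen_three, comm'_der_x]
  rfl

lemma sgen_five : sgen (x K) (y K) 5 = der K 6 21 18 := by
  rw [sgen, sgen_four, comm'_der_x]
  rfl

lemma sgen_six : sgen (x K) (y K) 6 = der K 18 9 9 := by
  rw [sgen, sgen_five, comm'_der_x]
  rfl

lemma sgen_seven : sgen (x K) (y K) 7 = der K 9 18 0 := by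
  rw [sgen, sgen_six, comm'_der_x]
  rfl

lemma tgenD_three : tgenD (x K) (y K) 3 = der K 2 26 24 := by
  rw [tgenD, sgen, comm'_y_x, comm'_der_y]
  rfl

lemma tgenD_three_eq :
    tgenD (x K) (y K) 3 = sgen (x K) (y K) 3 * sgen (x K) (y K) 7 * der K 22 0 0 := by
  rw [tgenD_three, sgen_three, sgen_seven, der_mul, der_mul]
  rfl

lemma tgenD_four : tgenD (x K) (y K) 4 = der K 9 3 6 := by
  rw [tgenD, sgen_three, comm'_der_y]
  rfl

lemma tgenD_five : tgenD (x K) (y K) 5 = der K 12 21 18 := by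
  rw [tgenD, sgen_four, comm'_der_y]
  rfl

lemma tgenD_six : tgenD (x K) (y K) 6 = der K 18 9 9 := by
  rw [tgenD, sgen_five, comm'_der_y]
  rfl

lemma tgenD_seven : tgenD (x K) (y K) 7 = der K 18 18 0 := by
  rw [tgenD, sgen_six, comm'_der_y]
  rfl

variable {K}

lemma der_mul_mem {H : Subgroup (Amalgam K)} {t a b : ZMod 27} (h : der K t a b ∈ H)
    (k : ZMod 27) : der K (k * t) (k * a) (k * b) ∈ H := by
  simpa only [der_pow, ZMod.natCast_zmod_val] using H.pow_mem h k.val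

lemma der_mem {H : Subgroup (Amalgam K)} (hyx : comm' (y K) (x K) ∈ H)
    (hx : ∀ g ∈ H, comm' g (x K) ∈ H) (hy : ∀ g ∈ H, comm' g (y K) ∈ H) (t a b : ZMod 27) :
    der K t a b ∈ H := by
  have hs (j) : sgen (x K) (y K) j ∈ H := sgen_mem hyx hx j
  have h_t (t : ZMod 27) : der K t 0 0 ∈ H := by
    have h22 : der K 22 0 0 ∈ H := by
      rw [← H.mul_mem_cancel_left (H.mul_mem (hs 3) (hs 7)), ← tgenD_three_eq]
      exact hy _ (hs 2)
    have h := der_mul_mem h22 (16 * t)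
    rw [mul_zero] at h
    convert h using 2
    linear_combination -(13 * t) * twentySeven_eq_zero
  have h_a : der K 13 8 0 ∈ H := by
    convert H.mul_mem (hs 3) (H.pow_mem hyx 3) using 1
    rw [sgen_three, comm'_y_x, der_pow, der_mul]
    rfl
  have h_b : der K 26 9 1 ∈ H := comm'_y_x (K := K) ▸ hyx
  obtain ⟨k, hk⟩ : ∃ k, k * 8 + b * 9 = a :=
    ⟨17 * (a - 9 * b), by linear_combination (5 * a - 45 * b) * twentySeven_eq_zero⟩
  have h := H.mul_mem (H.mul_mem (der_mul_mem h_a k) (der_mul_mem h_b b))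
    (h_t (t - (k * 13 + b * 26 + 3 * (k * 8 * b))))
  rw [der_mul, der_mul] at h
  convert h using 2
  · ring
  · rw [add_zero, hk]
  · ring

/-- The homomorphism `(n, a, b) ↦ (f n, a)` realizing the abelianization of the amalgam when `f` is
a cokernel of `κ`. -/
def abMap {B : Type*} [AddCommGroup B] (f : A →+ B) (hf : Function.Exact K.κ f) :
    Amalgam K →* Multiplicative (B × ZMod 3) :=
  toMultiplicative (f.prodMap (residue.toAddMonoidHom.comp (AddMonoidHom.fst _ _)))
    (fun v w => by
      change (f (K.bracket v w).1, residue (K.bracket v w).2.1) = 0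
      rw [bracket_apply, hf.apply_apply_eq_zero, map_mul, residue_tripling, mul_zero]
      rfl)
    (fun ⟨n, a, b⟩ => by
      change (f (K.twist (n, a, b)).1, residue (K.twist (n, a, b)).2.1) = (f n, residue a)
      rw [twist_apply, map_add, hf.apply_apply_eq_zero, add_zero, map_add, map_mul,
        residue_tripling, mul_zero, add_zero])

section Abelianization

variable {B : Type*} [AddCommGroup B] {f : A →+ B} (hf : Function.Exact K.κ f)

lemma abMap_mk (n : A) (a : ZMod 81) (b : ZMod 27) :
    abMap f hf (⟨(n, a, b)⟩ : Amalgam K) = Multiplicative.ofAdd (f n, residue a) := rfl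

lemma mem_ker_abMap {g : Amalgam K} : g ∈ (abMap f hf).ker ↔ ∃ t a b, der K t a b = g := by
  constructor
  · obtain ⟨n, a, b⟩ := g
    intro hg
    rw [MonoidHom.mem_ker, abMap_mk, ofAdd_eq_one, Prod.mk_eq_zero] at hg
    obtain ⟨t, rfl⟩ := (hf n).1 hg.1
    obtain ⟨c, rfl⟩ := exists_tripling_eq hg.2
    exact ⟨t, c, b, rfl⟩
  · rintro ⟨t, a, b, rfl⟩
    rw [MonoidHom.mem_ker, der, abMap_mk, hf.apply_apply_eq_zero, residue_tripling]
    rfl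

lemma ker_abMap : (abMap f hf).ker = commutator (Amalgam K) := by
  refine le_antisymm (fun g hg => ?_) (Abelianization.commutator_subset_ker _)
  obtain ⟨t, a, b, rfl⟩ := (mem_ker_abMap hf).1 hg
  exact der_mem (comm'_mem_commutator_s13 _ _) (fun _ _ => comm'_mem_commutator_s13 _ _)
    (fun _ _ => comm'_mem_commutator_s13 _ _) t a b

lemma abMap_surjective (hfs : Function.Surjective f) : Function.Surjective (abMap f hf) := by
  rintro ⟨m, c⟩
  obtain ⟨n, rfl⟩ := hfs m
  obtain ⟨a, rfl⟩ := ZMod.ringHom_surjective residue c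
  exact ⟨⟨(n, a, 0)⟩, rfl⟩

/-- The abelianization of the amalgam is `(A / κ (ZMod 27)) × ZMod 3`. -/
noncomputable def abelianizationEquiv (hfs : Function.Surjective f) :
    Abelianization (Amalgam K) ≃* Multiplicative (B × ZMod 3) :=
  (QuotientGroup.quotientMulEquivOfEq (ker_abMap hf).symm).trans
    (QuotientGroup.quotientKerEquivOfSurjective _ (abMap_surjective hf hfs))

end Abelianization

lemma exact_mk_range : Function.Exact K.κ (QuotientAddGroup.mk' K.κ.range) := fun n => by
  rw [QuotientAddGroup.mk'_apply, QuotientAddGroup.eq_zero_iff]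
  rfl

lemma mem_commutator_iff {g : Amalgam K} :
    g ∈ commutator (Amalgam K) ↔ ∃ t a b, der K t a b = g := by
  rw [← ker_abMap exact_mk_range, mem_ker_abMap]

lemma x_pow (m : ℕ) : x K ^ m = ⟨(m • K.gen, 0, 0)⟩ := by
  induction m with
  | zero => rw [pow_zero, zero_smul]; rfl
  | succ m ih =>
    rw [pow_succ, ih, mul_x, succ_nsmul]
    simp

lemma closure_x_y (hgen : ∀ n : A, ∃ m : ℕ, m • K.gen = n) :
    Subgroup.closure {x K, y K} = ⊤ := by
  rw [eq_top_iff]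
  rintro ⟨n, a, b⟩ -
  have hx : x K ∈ Subgroup.closure {x K, y K} := Subgroup.subset_closure (by simp)
  have hy : y K ∈ Subgroup.closure {x K, y K} := Subgroup.subset_closure (by simp)
  obtain ⟨m, rfl⟩ := hgen n
  have hxy : x K ^ m * y K ^ (residue a).val ∈ Subgroup.closure {x K, y K} :=
    Subgroup.mul_mem _ (Subgroup.pow_mem _ hx _) (Subgroup.pow_mem _ hy _)
  have hker : (x K ^ m * y K ^ (residue a).val)⁻¹ * ⟨(m • K.gen, a, b)⟩ ∈
      (abMap _ (exact_mk_range (K := K))).ker := by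
    rw [MonoidHom.mem_ker, map_mul, map_inv, inv_mul_eq_one, x_pow, map_mul, map_pow, abMap_mk, y,
      abMap_mk, abMap_mk, ← ofAdd_nsmul, ← ofAdd_add]
    simp
  obtain ⟨t, a', b', h⟩ := (mem_ker_abMap _).1 hker
  rw [← Subgroup.mul_mem_cancel_left _ (Subgroup.inv_mem _ hxy), ← h]
  exact der_mem (comm'_mem hy hx) (fun _ hg => comm'_mem hg hx) (fun _ hg => comm'_mem hg hy)
    t a' b'

/-- The additive map underlying the involution of the amalgam that inverts the abelianization. -/
def flip (K : AmalgamDatum A) : A × ZMod 81 × ZMod 27 →+ A × ZMod 81 × ZMod 27 :=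
  AddMonoidHom.mk' (fun v => (-v.1 - K.κ v.2.2, -v.2.1 - 8 * tripling v.2.2, v.2.2))
    (fun v w => by ext <;> simp only [Prod.fst_add, Prod.snd_add, map_add, mul_add] <;> abel)

lemma flip_apply (n : A) (a : ZMod 81) (b : ZMod 27) :
    flip K (n, a, b) = (-n - K.κ b, -a - 8 * tripling b, b) := rfl

lemma form_flip (v w : A × ZMod 81 × ZMod 27) : form (flip K v) (flip K w) = -form v w := by
  obtain ⟨n, a, b⟩ := v
  obtain ⟨n', a', b'⟩ := w
  simp only [flip_apply, form_apply, map_sub, map_neg, map_mul, map_ofNat, reduction_tripling]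
  ring

lemma flip_bracket (v w : A × ZMod 81 × ZMod 27) :
    flip K (K.bracket v w) = K.bracket (flip K v) (flip K w) := by
  rw [bracket_apply, bracket_apply, form_flip, flip_apply]
  simp

lemma twist_flip_twist (v : A × ZMod 81 × ZMod 27) :
    K.twist (flip K (K.twist v)) = flip K v := by
  obtain ⟨n, a, b⟩ := v
  simp only [twist_apply, flip_apply]
  refine Prod.ext ?_ (Prod.ext ?_ ?_)
  · simp only [two_mul, map_sub, map_add]
    abel
  · simp only [map_sub, tripling_reduction, tripling_ofNat_mul]
    ring
  · simp only [map_sub, map_add, map_neg, map_mul, map_ofNat, reduction_tripling,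
      tripling_reduction, tripling_ofNat_mul]
    linear_combination (b - reduction a) * twentySeven_eq_zero

lemma flip_flip (v : A × ZMod 81 × ZMod 27) : flip K (flip K v) = v := by
  obtain ⟨n, a, b⟩ := v
  simp [flip_apply]

/-- The endomorphism of the amalgam induced by `flip`. -/
def flipHom (K : AmalgamDatum A) : Amalgam K →* Amalgam K :=
  TwistedGroup.map (flip K) (-AddMonoidHom.id _) flip_bracket
    (fun v => by
      change flip K (K.twist v) = K.twistDatum.act (-1) (flip K v)
      rw [← twist_flip_twist v]
      change _ = K.twistDatum.act (-1) (K.twistDatum.twist (flip K (K.twist v)))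
      rw [← TwistDatum_s13.act_one, TwistDatum_s13.act_act, neg_add_cancel, TwistDatum_s13.act_zero]
      rfl)
    (fun ⟨n, a, b⟩ => by
      simp [flip_apply, char_apply, K.χ_κ, residue_tripling, add_comm])

/-- The automorphism of the amalgam induced by `flip`. -/
def flipEquiv (K : AmalgamDatum A) : Amalgam K ≃* Amalgam K :=
  MonoidHom.toMulEquiv (flipHom K) (flipHom K)
    (MonoidHom.ext fun g => TwistedGroup.ext (flip_flip g.val))
    (MonoidHom.ext fun g => TwistedGroup.ext (flip_flip g.val))

lemma isSigmaGroup : IsSigmaGroup (Amalgam K) := by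
  refine ⟨flipEquiv K, fun g => ?_⟩
  rw [eq_inv_iff_mul_eq_one, ← map_mul, ← MonoidHom.mem_ker, Abelianization.ker_of,
    ← ker_abMap exact_mk_range, MonoidHom.mem_ker, map_mul]
  obtain ⟨n, a, b⟩ := g
  change abMap _ exact_mk_range (⟨flip K (n, a, b)⟩ : Amalgam K) * _ = 1
  rw [flip_apply, abMap_mk, abMap_mk, ← ofAdd_add, ofAdd_eq_one, map_sub, map_neg,
    exact_mk_range.apply_apply_eq_zero, map_sub, map_mul, residue_tripling]
  simp

section DerivedSeries

open scoped commutatorElement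

lemma commutatorElement_der (t a b t' a' b' : ZMod 27) :
    ⁅der K t a b, der K t' a' b'⁆ = der K (6 * (a * b' - b * a')) 0 0 := by
  rw [commutatorElement_def, mul_inv_eq_iff_eq_mul, mul_inv_eq_iff_eq_mul, der_mul, der_mul,
    der_mul]
  congr 1 <;> ring

variable (K)

lemma derivedSeries_two : derivedSeries (Amalgam K) 2 = Subgroup.zpowers (der K 3 0 0) := by
  rw [derivedSeries_succ, derivedSeries_one]
  apply le_antisymm
  · rw [Subgroup.commutator_le]
    intro g hg h hh
    obtain ⟨t, a, b, rfl⟩ := mem_commutator_iff.1 hg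
    obtain ⟨t', a', b', rfl⟩ := mem_commutator_iff.1 hh
    convert der_mul_mem (Subgroup.mem_zpowers (der K 3 0 0)) (2 * (a * b' - b * a')) using 1
    rw [commutatorElement_der, mul_zero]
    congr 1
    ring
  · rw [Subgroup.zpowers_le]
    have h := Subgroup.commutator_mem_commutator (mem_commutator_iff.2 ⟨0, 1, 0, rfl⟩)
      (mem_commutator_iff.2 ⟨0, 0, 14, rfl⟩ : der K 0 0 14 ∈ _)
    rwa [commutatorElement_der] at h

lemma derivedSeries_three : derivedSeries (Amalgam K) 3 = ⊥ := by
  rw [derivedSeries_succ, derivedSeries_two, Subgroup.commutator_eq_bot_iff_le_centralizer]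
  exact Subgroup.le_centralizer _

lemma derivedSeries_two_eq_bot_iff : derivedSeries (Amalgam K) 2 = ⊥ ↔ K.κ 3 = 0 := by
  rw [derivedSeries_two, Subgroup.zpowers_eq_bot]
  constructor
  · exact fun h => congrArg (fun g => g.val.1) h
  · intro h
    rw [der, h, map_zero]
    rfl

end DerivedSeries

section Functoriality

variable {A' : Type*} [AddCommGroup A'] {K' : AmalgamDatum A'} (f : A →+ A')

/-- The homomorphism of amalgams induced by a homomorphism of abelian groups compatible with `κ` and
`χ`. -/
def map (hκ : ∀ t, f (K.κ t) = K'.κ t) (hχ : ∀ n, K'.χ (f n) = K.χ n) : Amalgam K →* Amalgam K' :=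
  TwistedGroup.map (f.prodMap (AddMonoidHom.id _)) (AddMonoidHom.id _)
    (fun v w => by
      change (f (K.bracket v w).1, (K.bracket v w).2) = (K'.bracket _ _)
      rw [bracket_apply, bracket_apply, hκ]
      rfl)
    (fun ⟨n, a, b⟩ => by
      change (f (K.twist (n, a, b)).1, (K.twist (n, a, b)).2) = K'.twistDatum.act 1 _
      rw [TwistDatum_s13.act_one]
      change _ = K'.twist (f n, a, b)
      rw [twist_apply, twist_apply, map_add, hκ])
    (fun ⟨n, a, b⟩ => by
      change K'.twistDatum.char (f n, a, b) = _
      rw [char_apply, hχ]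
      rfl)

variable {f} (hκ : ∀ t, f (K.κ t) = K'.κ t) (hχ : ∀ n, K'.χ (f n) = K.χ n)

lemma map_surjective (hf : Function.Surjective f) : Function.Surjective (map f hκ hχ) := by
  rintro ⟨n, v⟩
  obtain ⟨m, rfl⟩ := hf n
  exact ⟨⟨(m, v)⟩, rfl⟩

lemma ker_map (hf : f.ker = AddSubgroup.zmultiples (K.κ 3)) :
    (map f hκ hχ).ker = derivedSeries (Amalgam K) 2 := by
  rw [derivedSeries_two]
  apply le_antisymm
  · rintro ⟨n, a, b⟩ hg
    have hg' : (f n, a, b) = 0 := congrArg val hg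
    obtain ⟨hn, rfl, rfl⟩ := by simpa using hg'
    have hn' : n ∈ f.ker := hn
    rw [hf, AddSubgroup.mem_zmultiples_iff] at hn'
    obtain ⟨k, rfl⟩ := hn'
    convert der_mul_mem (Subgroup.mem_zpowers (der K 3 0 0)) (k : ZMod 27) using 1
    simp [der, ← zsmul_eq_mul]
  · rw [Subgroup.zpowers_le, MonoidHom.mem_ker]
    have h : K.κ 3 ∈ f.ker := hf ▸ AddSubgroup.mem_zmultiples _
    exact mk_congr h rfl rfl

end Functoriality

lemma card_amalgam : Nat.card (Amalgam K) = 3 ^ 7 * Nat.card A := by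
  rw [Nat.card_congr (valEquiv _), Nat.card_prod, Nat.card_prod, Nat.card_zmod, Nat.card_zmod]
  ring

section Relations

lemma sgen_four_pow_three :
    sgen (x K) (y K) 4 ^ 3 = sgen (x K) (y K) 6 ^ 2 * sgen (x K) (y K) 7 := by
  rw [sgen_four, sgen_six, sgen_seven, der_pow, der_pow, der_mul]
  rfl

lemma sgen_five_pow_three : sgen (x K) (y K) 5 ^ 3 = sgen (x K) (y K) 7 ^ 2 := by
  rw [sgen_five, sgen_seven, der_pow, der_pow]
  rfl

lemma tgenD_six_eq : tgenD (x K) (y K) 6 = sgen (x K) (y K) 6 := by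
  rw [tgenD_six, sgen_six]

variable (hκ : K.κ 3 = 0)
include hκ

lemma der_add_three_mul (t c a b : ZMod 27) : der K (t + 3 * c) a b = der K t a b := by
  have h : K.κ (3 * c) = 0 := by
    rw [← ZMod.natCast_zmod_val c, mul_comm, ← nsmul_eq_mul, map_nsmul, hκ, smul_zero]
  rw [der, map_add, h, add_zero, der]

lemma y_pow_three : y K ^ 3 = sgen (x K) (y K) 7 := by
  have h2 : y K * y K = ⟨(K.κ 26, 29, 1)⟩ := by
    nth_rw 1 [y]
    rw [mul_y, zero_add]
    rfl
  have h3 : K.κ 26 + K.κ (3 * 1 - reduction 29) = 0 := by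
    rw [← map_add]
    exact map_zero K.κ
  rw [pow_three', h2, mul_y, sgen_seven, ← der_add_three_mul hκ 9 6, der]
  exact mk_congr (h3.trans (map_zero K.κ).symm) rfl rfl

lemma sgen_two_pow_three :
    sgen (x K) (y K) 2 ^ 3 = sgen (x K) (y K) 4 ^ 2 * sgen (x K) (y K) 5 := by
  rw [sgen, comm'_y_x, sgen_four, sgen_five, der_pow, der_pow, der_mul]
  exact der_add_three_mul hκ 9 5 0 3

lemma sgen_three_pow_three :
    sgen (x K) (y K) 3 ^ 3 = sgen (x K) (y K) 5 ^ 2 * sgen (x K) (y K) 6 := by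
  rw [sgen_three, sgen_five, sgen_six, der_pow, der_pow, der_mul]
  exact der_add_three_mul hκ 3 6 24 18

lemma tgenD_four_eq : tgenD (x K) (y K) 4 = sgen (x K) (y K) 4 := by
  rw [tgenD_four, sgen_four]
  exact der_add_three_mul hκ 15 7 3 6

lemma tgenD_five_eq : tgenD (x K) (y K) 5 = sgen (x K) (y K) 5 := by
  rw [tgenD_five, sgen_five]
  exact der_add_three_mul hκ 6 2 21 18

lemma tgenD_seven_eq : tgenD (x K) (y K) 7 = sgen (x K) (y K) 7 := by
  rw [tgenD_seven, sgen_seven]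
  exact der_add_three_mul hκ 9 3 18 0

end Relations

end Amalgam

lemma three_pow_mul_twentySeven_eq_zero (e : ℕ) {k : ℕ} (hk : k ≤ 3) :
    (3 ^ e : ZMod (3 ^ (e + k))) * (27 : ℕ) = 0 := by
  have h : 3 ^ (e + k) ∣ 3 ^ e * 27 :=
    (pow_dvd_pow 3 (Nat.add_le_add_left hk e)).trans (pow_add 3 e 3).dvd
  exact_mod_cast (ZMod.natCast_eq_zero_iff _ _).2 h

/-- The amalgam datum on `ZMod (3 ^ (e + k))` with `κ t = 3 ^ e * u * t` and `gen = 1`. It gives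
`x ^ 3 ^ e = (κ u⁻¹, 0, 0)`, so that `u` is dictated by the exponent of `w` in the relation for
`t₃`. -/
def cyclicDatum {e k : ℕ} (he : 1 ≤ e) (hk : k ≤ 3) (u : (ZMod 27)ˣ) :
    AmalgamDatum (ZMod (3 ^ (e + k))) where
  κ := (liftMul (3 ^ e) (three_pow_mul_twentySeven_eq_zero e hk)).comp (AddMonoidHom.mulLeft u.val)
  χ := (ZMod.castHom (dvd_pow_self 3 (by lia)) (ZMod 3)).toAddMonoidHom
  gen := 1
  χ_κ t := by
    have h : 3 ∣ 3 ^ (e + k) := dvd_pow_self 3 (by lia)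
    obtain ⟨m, hm⟩ := ZMod.intCast_surjective (u.val * t)
    change ZMod.castHom h (ZMod 3)
      (liftMul _ (three_pow_mul_twentySeven_eq_zero e hk) (u.val * t)) = 0
    rw [← hm, liftMul_intCast, map_mul, map_pow, map_ofNat, show (3 : ZMod 3) = 0 from rfl,
      zero_pow (Nat.one_le_iff_ne_zero.1 he), zero_mul]
  χ_gen := map_one (ZMod.castHom (dvd_pow_self 3 (by lia)) (ZMod 3))

lemma castHom_eq_zero_iff_dvd {d N : ℕ} (h : d ∣ N) (n : ZMod N) :
    ZMod.castHom h (ZMod d) n = 0 ↔ (d : ZMod N) ∣ n := by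
  constructor
  · obtain ⟨j, rfl⟩ := ZMod.intCast_surjective n
    rw [map_intCast, ZMod.intCast_zmod_eq_zero_iff_dvd]
    rintro ⟨m, rfl⟩
    exact ⟨m, by push_cast; rfl⟩
  · rintro ⟨m, rfl⟩
    rw [map_mul, map_natCast, ZMod.natCast_self, zero_mul]

section Cyclic

variable {e k : ℕ} {he : 1 ≤ e} {hk : k ≤ 3} {u : (ZMod 27)ˣ}

lemma cyclicDatum_κ_inv_mul (m : ℤ) : (cyclicDatum he hk u).κ (↑u⁻¹ * m) = 3 ^ e * m := by
  change liftMul _ (three_pow_mul_twentySeven_eq_zero e hk) (u * (↑u⁻¹ * m)) = _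
  rw [Units.mul_inv_cancel_left, liftMul_intCast]

lemma cyclicDatum_κ_inv_mul_three (m : ℤ) :
    (cyclicDatum he hk u).κ (↑u⁻¹ * m * 3) = 3 ^ (e + 1) * m := by
  have h := cyclicDatum_κ_inv_mul (he := he) (hk := hk) (u := u) (m * 3)
  push_cast at h
  rw [mul_assoc, h]
  ring

lemma exists_inv_mul_intCast_eq (t : ZMod 27) : ∃ m : ℤ, ↑u⁻¹ * (m : ZMod 27) = t := by
  obtain ⟨m, hm⟩ := ZMod.intCast_surjective (u.val * t)
  exact ⟨m, by rw [hm, Units.inv_mul_cancel_left]⟩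

lemma cyclicDatum_exact (h : 3 ^ e ∣ 3 ^ (e + k)) :
    Function.Exact (cyclicDatum he hk u).κ (ZMod.castHom h (ZMod (3 ^ e))).toAddMonoidHom := by
  intro n
  refine (castHom_eq_zero_iff_dvd h n).trans ?_
  rw [Nat.cast_pow, Nat.cast_ofNat]
  constructor
  · rintro ⟨c, rfl⟩
    obtain ⟨m, rfl⟩ := ZMod.intCast_surjective c
    exact ⟨_, cyclicDatum_κ_inv_mul m⟩
  · rintro ⟨t, rfl⟩
    obtain ⟨m, rfl⟩ := exists_inv_mul_intCast_eq (u := u) t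
    exact ⟨m, cyclicDatum_κ_inv_mul m⟩

/-- `abelianizationEquiv` for the cyclic amalgam datum. -/
noncomputable def cyclicAbelianizationEquiv :
    Abelianization (Amalgam (cyclicDatum he hk u)) ≃* Multiplicative (ZMod (3 ^ e) × ZMod 3) :=
  Amalgam.abelianizationEquiv (cyclicDatum_exact (pow_dvd_pow 3 (Nat.le_add_right e k)))
    (ZMod.ringHom_surjective _)

lemma cyclicDatum_ker_castHom (h : 3 ^ (e + 1) ∣ 3 ^ (e + k)) :
    (ZMod.castHom h (ZMod (3 ^ (e + 1)))).toAddMonoidHom.ker =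
      AddSubgroup.zmultiples ((cyclicDatum he hk u).κ 3) := by
  ext n
  refine (castHom_eq_zero_iff_dvd h n).trans ?_
  rw [AddSubgroup.mem_zmultiples_iff, Nat.cast_pow, Nat.cast_ofNat]
  constructor
  · rintro ⟨c, rfl⟩
    obtain ⟨m, rfl⟩ := ZMod.intCast_surjective c
    obtain ⟨j, hj⟩ := ZMod.intCast_surjective (u⁻¹.val * (m : ZMod 27))
    exact ⟨j, by rw [← cyclicDatum_κ_inv_mul_three, ← map_zsmul, zsmul_eq_mul, hj]⟩
  · rintro ⟨j, rfl⟩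
    obtain ⟨m, hm⟩ := exists_inv_mul_intCast_eq (u := u) j
    exact ⟨m, by rw [← cyclicDatum_κ_inv_mul_three, ← map_zsmul, zsmul_eq_mul, hm]⟩

lemma exists_nsmul_gen (n : ZMod (3 ^ (e + k))) : ∃ m : ℕ, m • (cyclicDatum he hk u).gen = n :=
  ⟨n.val, by simp [cyclicDatum]⟩

lemma x_pow_three_pow : Amalgam.x (cyclicDatum he hk u) ^ 3 ^ e = Amalgam.der _ ↑u⁻¹ 0 0 := by
  have h := cyclicDatum_κ_inv_mul (he := he) (hk := hk) (u := u) 1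
  rw [Int.cast_one, Int.cast_one, mul_one, mul_one] at h
  rw [Amalgam.x_pow, Amalgam.der, h, map_zero]
  simp [cyclicDatum]

lemma x_pow_three_pow_pow_three (hκ : (cyclicDatum he hk u).κ 3 = 0) :
    (Amalgam.x (cyclicDatum he hk u) ^ 3 ^ e) ^ 3 = 1 := by
  rw [x_pow_three_pow, Amalgam.der_pow, mul_zero, ← zero_add (_ * _)]
  exact (Amalgam.der_add_three_mul hκ 0 _ _ _).trans Amalgam.der_zero

lemma tgenD_three_eq_mul_x_pow (hκ : (cyclicDatum he hk u).κ 3 = 0) {m : ℕ}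
    (hm : (u : ZMod 27) = m) :
    tgenD (Amalgam.x (cyclicDatum he hk u)) (Amalgam.y _) 3 =
      sgen (Amalgam.x _) (Amalgam.y _) 3 * sgen (Amalgam.x _) (Amalgam.y _) 7 *
        (Amalgam.x _ ^ 3 ^ e) ^ m := by
  rw [Amalgam.tgenD_three_eq, x_pow_three_pow, Amalgam.der_pow, ← hm, Units.mul_inv, mul_zero]
  exact congrArg _ (Amalgam.der_add_three_mul hκ 1 7 0 0)

lemma castHom_cyclicDatum_κ {l : ℕ} {hl : l ≤ 3} (h : 3 ^ (e + l) ∣ 3 ^ (e + k)) (t : ZMod 27) :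
    ZMod.castHom h (ZMod (3 ^ (e + l))) ((cyclicDatum he hk u).κ t) =
      (cyclicDatum he hl u).κ t := by
  obtain ⟨m, rfl⟩ := exists_inv_mul_intCast_eq (u := u) t
  rw [cyclicDatum_κ_inv_mul, cyclicDatum_κ_inv_mul, map_mul, map_pow, map_ofNat, map_intCast]

lemma cyclicDatum_χ_castHom {l : ℕ} {hl : l ≤ 3} (h : 3 ^ (e + l) ∣ 3 ^ (e + k))
    (n : ZMod (3 ^ (e + k))) :
    (cyclicDatum he hl u).χ (ZMod.castHom h (ZMod (3 ^ (e + l))) n) =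
      (cyclicDatum he hk u).χ n := by
  obtain ⟨m, rfl⟩ := ZMod.intCast_surjective n
  rw [map_intCast]
  have h3 {j : ℕ} : 3 ∣ 3 ^ (e + j) := dvd_pow_self 3 (by lia)
  exact (map_intCast (ZMod.castHom h3 (ZMod 3)) m).trans
    (map_intCast (ZMod.castHom h3 (ZMod 3)) m).symm

lemma cyclicDatum_κ_three_eq_zero_iff : (cyclicDatum he hk u).κ 3 = 0 ↔ k ≤ 1 := by
  have h : (3 ^ (e + 1) : ZMod (3 ^ (e + k))) = 0 ↔ k ≤ 1 := by
    have h' := ZMod.natCast_eq_zero_iff (3 ^ (e + 1)) (3 ^ (e + k))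
    rwa [Nat.pow_dvd_pow_iff_le_right (by norm_num), Nat.add_le_add_iff_left, Nat.cast_pow,
      Nat.cast_ofNat] at h'
  rw [← h]
  constructor
  · intro h3
    obtain ⟨j, hj⟩ := ZMod.intCast_surjective (u⁻¹.val * ((1 : ℤ) : ZMod 27))
    have h1 := cyclicDatum_κ_inv_mul_three (he := he) (hk := hk) (u := u) 1
    rwa [← hj, ← zsmul_eq_mul, map_zsmul, h3, smul_zero, Int.cast_one, mul_one, eq_comm] at h1
  · intro h0
    obtain ⟨m, hm⟩ := exists_inv_mul_intCast_eq (u := u) 1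
    rw [← one_mul (3 : ZMod 27), ← hm, cyclicDatum_κ_inv_mul_three, h0, zero_mul]

lemma card_cyclic : Nat.card (Amalgam (cyclicDatum he hk u)) = 3 ^ (7 + k + e) := by
  rw [Amalgam.card_amalgam, Nat.card_zmod]
  ring

end Cyclic

open Amalgam in
theorem stmt13_general (e i : ℕ) (he : 1 ≤ e) (hi : ¬ 3 ∣ i - 1) :
    ∃ (M : Type) (_ : Group M) (_ : Finite M) (x y : M),
      Subgroup.closure {x, y} = ⊤ ∧
      Nat.card M = 3 ^ (8 + e) ∧
      IsMetabelian M ∧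
      IsSigmaGroup M ∧
      (x ^ 3 ^ e) ^ 3 = 1 ∧
      y ^ 3 = sgen x y 7 ∧
      sgen x y 2 ^ 3 = sgen x y 4 ^ 2 * sgen x y 5 ∧
      sgen x y 3 ^ 3 = sgen x y 5 ^ 2 * sgen x y 6 ∧
      sgen x y 4 ^ 3 = sgen x y 6 ^ 2 * sgen x y 7 ∧
      sgen x y 5 ^ 3 = sgen x y 7 ^ 2 ∧
      tgenD x y 3 = sgen x y 3 * sgen x y 7 * (x ^ 3 ^ e) ^ (i - 1) ∧
      tgenD x y 4 = sgen x y 4 ∧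
      tgenD x y 5 = sgen x y 5 ∧
      tgenD x y 6 = sgen x y 6 ∧
      tgenD x y 7 = sgen x y 7 ∧
      Nonempty (Abelianization M ≃* Multiplicative (ZMod (3 ^ e) × ZMod 3)) ∧
      ∃ (G : Type) (_ : Group G) (_ : Finite G),
        Nat.card G = 3 ^ (10 + e) ∧
        Nonempty (Abelianization G ≃* Multiplicative (ZMod (3 ^ e) × ZMod 3)) ∧
        IsSigmaGroup G ∧
        derivedSeries G 2 ≠ ⊥ ∧
        derivedSeries G 3 = ⊥ ∧
        ∃ φ : G →* M, Function.Surjective φ ∧ φ.ker = derivedSeries G 2 := by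
  obtain ⟨u, hu⟩ : ∃ u : (ZMod 27)ˣ, (u : ZMod 27) = (i - 1 : ℕ) :=
    (ZMod.isUnit_iff_coprime (i - 1) 27).2 <|
      .pow_right 3 ((Nat.Prime.coprime_iff_not_dvd Nat.prime_three).2 hi).symm
  have h13 : 1 ≤ 3 := by norm_num
  have hM : (cyclicDatum he h13 u).κ 3 = 0 := cyclicDatum_κ_three_eq_zero_iff.2 le_rfl
  have hG : (cyclicDatum he le_rfl u).κ 3 ≠ 0 :=
    mt cyclicDatum_κ_three_eq_zero_iff.1 (by norm_num)
  have h : 3 ^ (e + 1) ∣ 3 ^ (e + 3) := pow_dvd_pow 3 (by lia)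
  refine ⟨Amalgam (cyclicDatum he h13 u), _, inferInstance, x _, y _,
    closure_x_y exists_nsmul_gen, by rw [card_cyclic], (derivedSeries_two_eq_bot_iff _).2 hM,
    isSigmaGroup, ?_⟩
  refine ⟨x_pow_three_pow_pow_three hM, y_pow_three hM, sgen_two_pow_three hM,
    sgen_three_pow_three hM, sgen_four_pow_three, sgen_five_pow_three,
    tgenD_three_eq_mul_x_pow hM hu, tgenD_four_eq hM, tgenD_five_eq hM, tgenD_six_eq,
    tgenD_seven_eq hM, ⟨cyclicAbelianizationEquiv⟩, ?_⟩
  exact ⟨Amalgam (cyclicDatum he le_rfl u), _, inferInstance, by rw [card_cyclic],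
    ⟨cyclicAbelianizationEquiv⟩, isSigmaGroup, mt (derivedSeries_two_eq_bot_iff _).1 hG,
    derivedSeries_three _, Amalgam.map _ (castHom_cyclicDatum_κ h) (cyclicDatum_χ_castHom h),
    map_surjective _ _ (ZMod.ringHom_surjective _), ker_map _ _ (cyclicDatum_ker_castHom h)⟩

theorem stmt13 (e i : ℕ) (he : 7 ≤ e) (hi : i = 2 ∨ i = 3) :
    ∃ (M : Type) (_ : Group M) (_ : Finite M) (x y : M),
      Subgroup.closure {x, y} = ⊤ ∧
      Nat.card M = 3 ^ (8 + e) ∧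
      IsMetabelian M ∧
      IsSigmaGroup M ∧
      (x ^ 3 ^ e) ^ 3 = 1 ∧
      y ^ 3 = sgen x y 7 ∧
      sgen x y 2 ^ 3 = sgen x y 4 ^ 2 * sgen x y 5 ∧
      sgen x y 3 ^ 3 = sgen x y 5 ^ 2 * sgen x y 6 ∧
      sgen x y 4 ^ 3 = sgen x y 6 ^ 2 * sgen x y 7 ∧
      sgen x y 5 ^ 3 = sgen x y 7 ^ 2 ∧
      tgenD x y 3 = sgen x y 3 * sgen x y 7 * (x ^ 3 ^ e) ^ (i - 1) ∧
      tgenD x y 4 = sgen x y 4 ∧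
      tgenD x y 5 = sgen x y 5 ∧
      tgenD x y 6 = sgen x y 6 ∧
      tgenD x y 7 = sgen x y 7 ∧
      Nonempty (Abelianization M ≃* Multiplicative (ZMod (3 ^ e) × ZMod 3)) ∧
      ∃ (G : Type) (_ : Group G) (_ : Finite G),
        Nat.card G = 3 ^ (10 + e) ∧
        Nonempty (Abelianization G ≃* Multiplicative (ZMod (3 ^ e) × ZMod 3)) ∧
        IsSigmaGroup G ∧
        derivedSeries G 2 ≠ ⊥ ∧
        derivedSeries G 3 = ⊥ ∧
        ∃ φ : G →* M, Function.Surjective φ ∧ φ.ker = derivedSeries G 2 :=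
  stmt13_general e i (by lia) (by rcases hi with rfl | rfl <;> decide)
end
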